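/- arXiv:1408.0529 — 2 statements merged into one kernel-verified Lean document; each statement's English description precedes it below -/
import Mathlib

section
/- Let n ≥ 1 and let A = {a, b₁,…,b_n, c₁,…,c_n, z} consist of 2n+2 distinct letters. Let π be the pair on A with π₀ listing A in the order a, b₁, c₁, b₂, c₂, …, b_n, c_n, z (i.e. π₀(a)=1, π₀(b_i)=2i, π₀(c_i)=2i+1, π₀(z)=2n+2) and π₁ listing A in the order z, c₁, b₁, c₂, b₂, …, c_n, b_n, a. Then π is irreducible and Alt(A) ⊆ G(π). -/
open Equiv

/-- A (labeled) pair on alphabet `A`: two bijections from `A` to positions.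
Positions are `Fin (Fintype.card A)`, 0-indexed: position `j : Fin N`
corresponds to the position `j+1 ∈ {1,…,N}` of the paper. -/
abbrev RPair (A : Type*) [Fintype A] := Bool → (A ≃ Fin (Fintype.card A))

variable {A : Type*} [Fintype A]

/-- Irreducibility: `π₁(π₀⁻¹({1,…,k})) = {1,…,k}` only for `k = N`. -/
def PairIrreducible (π : RPair A) : Prop :=
  ∀ k : Fin (Fintype.card A),
    (∀ x : A, π false x ≤ k → π true x ≤ k) → (k : ℕ) + 1 = Fintype.card A

/-- Type-ε right Rauzy induction sends `π` to `π'`.  Here `zc = π_ε⁻¹(N)` and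
`zo = π_{1-ε}⁻¹(N)` are characterized as the letters of maximal position. -/
def RightMove (π π' : RPair A) : Prop :=
  ∃ ε : Bool, ∃ zc zo : A,
    (∀ x : A, π ε x ≤ π ε zc) ∧
    (∀ x : A, π (!ε) x ≤ π (!ε) zo) ∧
    π' ε = π ε ∧
    (∀ b : A, π (!ε) b ≤ π (!ε) zc → π' (!ε) b = π (!ε) b) ∧
    ((π' (!ε) zo : ℕ) = (π (!ε) zc : ℕ) + 1) ∧
    (∀ b : A, ¬ π (!ε) b ≤ π (!ε) zc → b ≠ zo → (π' (!ε) b : ℕ) = (π (!ε) b : ℕ) + 1)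

/-- Type-ε left Rauzy induction sends `π` to `π'`.  Here `ac = π_ε⁻¹(1)` and
`ao = π_{1-ε}⁻¹(1)` are characterized as the letters of minimal position. -/
def LeftMove (π π' : RPair A) : Prop :=
  ∃ ε : Bool, ∃ ac ao : A,
    (∀ x : A, π ε ac ≤ π ε x) ∧
    (∀ x : A, π (!ε) ao ≤ π (!ε) x) ∧
    π' ε = π ε ∧
    (∀ b : A, π (!ε) ac ≤ π (!ε) b → π' (!ε) b = π (!ε) b) ∧
    ((π' (!ε) ao : ℕ) = (π (!ε) ac : ℕ) - 1) ∧
    (∀ b : A, ¬ π (!ε) ac ≤ π (!ε) b → b ≠ ao → (π' (!ε) b : ℕ) = (π (!ε) b : ℕ) - 1)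

/-- The Rauzy class `R(π)`: pairs reachable by right Rauzy inductions. -/
def RClass (π : RPair A) : Set (RPair A) := {ρ | Relation.ReflTransGen RightMove π ρ}

/-- The extended Rauzy class `E(π)`: pairs reachable by left and right Rauzy inductions. -/
def EClass (π : RPair A) : Set (RPair A) :=
  {ρ | Relation.ReflTransGen (fun x y => RightMove x y ∨ LeftMove x y) π ρ}

/-- `π ∘ ν = (π₀ ∘ ν, π₁ ∘ ν)`. -/
def pairRename (π : RPair A) (ν : Equiv.Perm A) : RPair A := fun ε => ν.trans (π ε)

/-- The renaming set `G(π) = {ν : π ∘ ν ∈ E(π)}`. -/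
def renamings (π : RPair A) : Set (Equiv.Perm A) := {ν | pairRename π ν ∈ EClass π}

/-- The non-labeled permutation `π₁ ∘ π₀⁻¹`. -/
def nonlabeled (π : RPair A) : Equiv.Perm (Fin (Fintype.card A)) :=
  (π false).symm.trans (π true)

/-- The position `1` (smallest). -/
def posFirst (A : Type*) [Fintype A] [Nonempty A] : Fin (Fintype.card A) :=
  ⟨0, Fintype.card_pos⟩

/-- The position `N` (largest). -/
def posLast (A : Type*) [Fintype A] [Nonempty A] : Fin (Fintype.card A) :=
  ⟨Fintype.card A - 1, Nat.sub_lt Fintype.card_pos Nat.one_pos⟩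

/-- A pair is standard if `π₀(π₁⁻¹(1)) = π₁(π₀⁻¹(1)) = N`. -/
def PairStandard [Nonempty A] (π : RPair A) : Prop :=
  π false ((π true).symm (posFirst A)) = posLast A ∧
  π true ((π false).symm (posFirst A)) = posLast A

/-- `S` is the permutation `S(π)` of the paper. -/
def IsS [Nonempty A] (π : RPair A) (S : Equiv.Perm A) : Prop :=
  ∀ b : A,
    (π true b = posFirst A → S b = (π false).symm (posFirst A)) ∧
    (π true b ≠ posFirst A →
      (((π true b : ℕ) = (π true ((π false).symm (posLast A)) : ℕ) + 1 →
        (π false (S b) : ℕ) = (π false ((π true).symm (posLast A)) : ℕ) + 1) ∧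
      ((π true b : ℕ) ≠ (π true ((π false).symm (posLast A)) : ℕ) + 1 →
        (π false (S b) : ℕ) =
          (π false ((π true).symm
            ⟨(π true b : ℕ) - 1,
              Nat.lt_of_le_of_lt (Nat.sub_le _ _) (π true b).isLt⟩) : ℕ) + 1)))

/-- The marked letter `X(π) = π₀⁻¹(1)`. -/
def XOf [Nonempty A] (π : RPair A) : A := (π false).symm (posFirst A)

/-- `Q` is the permutation `Q(π)` of the paper (constructed from `S = S(π)`). -/
def IsQ [Nonempty A] (π : RPair A) (S Q : Equiv.Perm A) : Prop :=
  Q (XOf π) = XOf π ∧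
  ∀ b : A, b ≠ XOf π →
    (S b = XOf π → Q b = S (S b)) ∧ (S b ≠ XOf π → Q b = S b)

/-- `Λ`: the multiset of cardinalities of the orbits of `Q` on `A ∖ {X}`
(for `Q` fixing `X`): the nontrivial cycle lengths of `Q` together with one `1`
for each fixed point of `Q` other than `X`. -/
def lamOf [DecidableEq A] (Q : Equiv.Perm A) : Multiset ℕ :=
  Q.cycleType + Multiset.replicate ((Finset.univ.filter fun a => Q a = a).card - 1) 1

/-- The centralizer `Z(π)` of `(X(π), Q(π))`. -/
def ZOf [Nonempty A] (π : RPair A) (Q : Equiv.Perm A) : Set (Equiv.Perm A) :=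
  {ν | ν (XOf π) = XOf π ∧ ν⁻¹ * Q * ν = Q}

def toL (p : A ≃ Fin (Fintype.card A)) : List A := List.ofFn p.symm

theorem toL_len (p : A ≃ Fin (Fintype.card A)) : (toL p).length = Fintype.card A := by
  simp [toL]

theorem toL_nodup (p : A ≃ Fin (Fintype.card A)) : (toL p).Nodup :=
  List.nodup_ofFn.2 p.symm.injective

theorem toL_get (p : A ≃ Fin (Fintype.card A)) (x : A) : (toL p)[(p x : ℕ)]? = some x := by
  simp [toL]

theorem toL_mem (p : A ≃ Fin (Fintype.card A)) (x : A) : x ∈ toL p :=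
  List.mem_of_getElem? (toL_get p x)

theorem toL_idx [DecidableEq A] (p : A ≃ Fin (Fintype.card A)) (x : A) :
    (p x : ℕ) = (toL p).idxOf x := by
  have h := toL_get p x
  obtain ⟨h1, h2⟩ := List.getElem?_eq_some_iff.1 h
  have := (toL_nodup p).idxOf_getElem _ h1
  rw [h2] at this
  exact this.symm

theorem toL_inj {p q : A ≃ Fin (Fintype.card A)} (h : toL p = toL q) : p = q := by
  classical
  ext x
  rw [toL_idx, toL_idx, h]

theorem toL_surj (l l' : List A) (p : A ≃ Fin (Fintype.card A)) (hl : toL p = l')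
    (h : l.Perm l') : ∃ q : A ≃ Fin (Fintype.card A), toL q = l := by
  classical
  have hlen : l.length = Fintype.card A := by rw [h.length_eq, ← hl, toL_len]
  have hnd : l.Nodup := by rw [h.nodup_iff, ← hl]; exact toL_nodup p
  have hm : ∀ x, x ∈ l := fun x => by rw [h.mem_iff, ← hl]; exact toL_mem p x
  refine ⟨((finCongr hlen.symm).trans (hnd.getEquivOfForallMemList l hm)).symm, ?_⟩
  apply List.ext_getElem
  · simp [toL, hlen]
  · intro i h1 h2
    simp [toL]

theorem toL_rename (p : A ≃ Fin (Fintype.card A)) (ν : Equiv.Perm A) :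
    toL (ν.trans p) = (toL p).map ν.symm := by
  simp only [toL, List.map_ofFn]
  rfl

abbrev St (x y : RPair A) : Prop := RightMove x y ∨ LeftMove x y
abbrev RStar : RPair A → RPair A → Prop := Relation.ReflTransGen St

theorem right_one (π : RPair A) (ε : Bool) (t x y : List A) (z o : A)
    (h1 : toL (π ε) = t ++ [z]) (h2 : toL (π (!ε)) = x ++ z :: (y ++ [o])) :
    ∃ π' : RPair A, RightMove π π' ∧ toL (π' ε) = t ++ [z] ∧
      toL (π' (!ε)) = x ++ z :: o :: y := by
  classical
  obtain ⟨q, hq⟩ := toL_surj (x ++ z :: o :: y) _ _ h2 (by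
    refine List.Perm.append_left _ (List.Perm.cons _ ?_)
    exact (List.perm_append_singleton o y).symm)
  have nd1 := toL_nodup (π ε)
  have nd2 := toL_nodup (π (!ε))
  have m1 := toL_mem (π ε)
  have m2 := toL_mem (π (!ε))
  rw [h1] at nd1 m1
  rw [h2] at nd2 m2
  have hne : ε ≠ !ε := by cases ε <;> simp
  refine ⟨Function.update π (!ε) q, ⟨ε, z, o, ?_, ?_, ?_, ?_, ?_, ?_⟩, ?_, ?_⟩
  · intro w
    rw [Fin.le_def, toL_idx, toL_idx, h1]
    specialize m1 w
    simp only [List.idxOf_append, List.idxOf_cons]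
    grind
  · intro w
    rw [Fin.le_def, toL_idx, toL_idx, h2]
    specialize m2 w
    simp only [List.idxOf_append, List.idxOf_cons]
    grind
  · simp [Function.update_of_ne hne]
  · intro w
    rw [Fin.le_def, Fin.ext_iff, Function.update_self, toL_idx, toL_idx, toL_idx, h2, hq]
    specialize m2 w
    simp only [List.idxOf_append, List.idxOf_cons]
    grind
  · rw [Function.update_self, toL_idx, toL_idx, h2, hq]
    simp only [List.idxOf_append, List.idxOf_cons]
    grind
  · intro w
    rw [Fin.le_def, Function.update_self, toL_idx, toL_idx, toL_idx, h2, hq]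
    specialize m2 w
    simp only [List.idxOf_append, List.idxOf_cons]
    grind
  · simpa [Function.update_of_ne hne] using h1
  · simpa using hq

theorem left_one (π : RPair A) (ε : Bool) (t x y : List A) (z o : A)
    (h1 : toL (π ε) = z :: t) (h2 : toL (π (!ε)) = o :: (y ++ z :: x)) :
    ∃ π' : RPair A, LeftMove π π' ∧ toL (π' ε) = z :: t ∧
      toL (π' (!ε)) = y ++ o :: z :: x := by
  classical
  obtain ⟨q, hq⟩ := toL_surj (y ++ o :: z :: x) _ _ h2 List.perm_middle
  have nd1 := toL_nodup (π ε)
  have nd2 := toL_nodup (π (!ε))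
  have m1 := toL_mem (π ε)
  have m2 := toL_mem (π (!ε))
  rw [h1] at nd1 m1
  rw [h2] at nd2 m2
  have hne : ε ≠ !ε := by cases ε <;> simp
  refine ⟨Function.update π (!ε) q, ⟨ε, z, o, ?_, ?_, ?_, ?_, ?_, ?_⟩, ?_, ?_⟩
  · intro w
    rw [Fin.le_def, toL_idx, toL_idx, h1]
    simp
  · intro w
    rw [Fin.le_def, toL_idx, toL_idx, h2]
    simp
  · simp [Function.update_of_ne hne]
  · intro w
    rw [Fin.le_def, Fin.ext_iff, Function.update_self, toL_idx, toL_idx, toL_idx, h2, hq]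
    specialize m2 w
    simp only [List.idxOf_append, List.idxOf_cons]
    grind
  · rw [Function.update_self, toL_idx, toL_idx, h2, hq]
    simp only [List.idxOf_append, List.idxOf_cons]
    grind
  · intro w
    rw [Fin.le_def, Function.update_self, toL_idx, toL_idx, toL_idx, h2, hq]
    specialize m2 w
    simp only [List.idxOf_append, List.idxOf_cons]
    grind
  · simpa [Function.update_of_ne hne] using h1
  · simpa using hq

theorem right_rot (ε : Bool) (t x : List A) (z : A) (y2 : List A) :
    ∀ (y1 : List A) (π : RPair A)
    (_ : toL (π ε) = t ++ [z]) (_ : toL (π (!ε)) = x ++ z :: (y1 ++ y2)),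
    ∃ π' : RPair A, RStar π π' ∧ toL (π' ε) = t ++ [z] ∧
      toL (π' (!ε)) = x ++ z :: (y2 ++ y1) := by
  induction y2 using List.reverseRecOn with
  | nil => intro y1 π h1 h2; exact ⟨π, .refl, h1, by simpa using h2⟩
  | append_singleton y2 o ih =>
    intro y1 π h1 h2
    obtain ⟨ρ, hr, e1, e2⟩ := right_one π ε t x (y1 ++ y2) z o h1 (by simpa using h2)
    obtain ⟨σ, hs, f1, f2⟩ := ih (o :: y1) ρ e1 (by simpa using e2)
    exact ⟨σ, Relation.ReflTransGen.head (Or.inl hr) hs, f1, by simpa using f2⟩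

theorem left_rot (ε : Bool) (t x : List A) (z : A) (y1 : List A) :
    ∀ (y2 : List A) (π : RPair A)
    (_ : toL (π ε) = z :: t) (_ : toL (π (!ε)) = y1 ++ y2 ++ z :: x),
    ∃ π' : RPair A, RStar π π' ∧ toL (π' ε) = z :: t ∧
      toL (π' (!ε)) = y2 ++ y1 ++ z :: x := by
  induction y1 with
  | nil => intro y1 π h1 h2; exact ⟨π, .refl, h1, by simpa using h2⟩
  | cons o y1 ih =>
    intro y2 π h1 h2
    obtain ⟨ρ, hr, e1, e2⟩ := left_one π ε t x (y1 ++ y2) z o h1 (by simpa using h2)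
    obtain ⟨σ, hs, f1, f2⟩ := ih (y2 ++ [o]) ρ e1 (by simpa using e2)
    exact ⟨σ, Relation.ReflTransGen.head (Or.inr hr) hs, f1, by simpa using f2⟩

theorem path_c (π : RPair A) (a b c z : A) (P Q P' Q' : List A)
    (h0 : toL (π false) = a :: P ++ b :: c :: Q ++ [z])
    (h1 : toL (π true) = z :: P' ++ c :: b :: Q' ++ [a]) :
    ∃ π', RStar π π' ∧ toL (π' false) = c :: P ++ b :: z :: Q ++ [a] ∧
      toL (π' true) = a :: P' ++ z :: b :: Q' ++ [c] := by
  obtain ⟨π1, s1, e1, f1⟩ := right_rot false (a :: P ++ b :: c :: Q) [] z (b :: Q' ++ [a])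
    (P' ++ [c]) π h0 (by simpa using h1)
  obtain ⟨π2, s2, f2, e2⟩ := left_rot true (b :: Q' ++ a :: P' ++ [c]) [] z (a :: P ++ [b])
    (c :: Q) π1 (by simpa using f1) (by simpa using e1)
  obtain ⟨π3, s3, e3, f3⟩ := left_rot false (Q ++ a :: P ++ b :: [z]) [] c (z :: b :: Q')
    (a :: P') π2 (by simpa using e2) (by simpa using f2)
  obtain ⟨π4, s4, f4, e4⟩ := right_rot true (a :: P' ++ z :: b :: Q') [] c (P ++ [b, z])
    (Q ++ [a]) π3 (by simpa using f3) (by simpa using e3)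
  exact ⟨π4, ((s1.trans s2).trans s3).trans s4, by simpa using e4, by simpa using f4⟩

theorem path_b (π : RPair A) (a b c z : A) (P Q P' Q' : List A)
    (h0 : toL (π false) = a :: P ++ b :: c :: Q ++ [z])
    (h1 : toL (π true) = z :: P' ++ c :: b :: Q' ++ [a]) :
    ∃ π', RStar π π' ∧ toL (π' false) = b :: P ++ z :: c :: Q ++ [a] ∧
      toL (π' true) = a :: P' ++ c :: z :: Q' ++ [b] := by
  obtain ⟨π1, s1, e1, f1⟩ := right_rot false (a :: P ++ b :: c :: Q) [] z (Q' ++ [a])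
    (P' ++ [c, b]) π h0 (by simpa using h1)
  obtain ⟨π2, s2, f2, e2⟩ := left_rot true (Q' ++ a :: P' ++ [c, b]) [] z (a :: P)
    (b :: c :: Q) π1 (by simpa using f1) (by simpa using e1)
  obtain ⟨π3, s3, e3, f3⟩ := left_rot false (c :: Q ++ a :: P ++ [z]) [] b (z :: Q')
    (a :: P' ++ [c]) π2 (by simpa using e2) (by simpa using f2)
  obtain ⟨π4, s4, f4, e4⟩ := right_rot true (a :: P' ++ c :: z :: Q') [] b (P ++ [z])
    (c :: Q ++ [a]) π3 (by simpa using f3) (by simpa using e3)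
  exact ⟨π4, ((s1.trans s2).trans s3).trans s4, by simpa using e4, by simpa using f4⟩

theorem right_rename {π ρ : RPair A} (ν : Equiv.Perm A) (h : RightMove π ρ) :
    RightMove (pairRename π ν) (pairRename ρ ν) := by
  obtain ⟨ε, zc, zo, h1, h2, h3, h4, h5, h6⟩ := h
  refine ⟨ε, ν.symm zc, ν.symm zo, ?_, ?_, ?_, ?_, ?_, ?_⟩ <;>
    simp only [pairRename, Equiv.trans_apply, Equiv.apply_symm_apply]
  · exact fun x => h1 _
  · exact fun x => h2 _
  · rw [h3]
  · exact fun x => h4 _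
  · exact h5
  · exact fun x hx hx' => h6 _ hx (fun h => hx' (by simp [← h]))

theorem left_rename {π ρ : RPair A} (ν : Equiv.Perm A) (h : LeftMove π ρ) :
    LeftMove (pairRename π ν) (pairRename ρ ν) := by
  obtain ⟨ε, zc, zo, h1, h2, h3, h4, h5, h6⟩ := h
  refine ⟨ε, ν.symm zc, ν.symm zo, ?_, ?_, ?_, ?_, ?_, ?_⟩ <;>
    simp only [pairRename, Equiv.trans_apply, Equiv.apply_symm_apply]
  · exact fun x => h1 _
  · exact fun x => h2 _
  · rw [h3]
  · exact fun x => h4 _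
  · exact h5
  · exact fun x hx hx' => h6 _ hx (fun h => hx' (by simp [← h]))

theorem star_rename {π ρ : RPair A} (ν : Equiv.Perm A) (h : RStar π ρ) :
    RStar (pairRename π ν) (pairRename ρ ν) := by
  induction h with
  | refl => exact .refl
  | tail _ h ih => exact ih.tail (h.imp (right_rename ν) (left_rename ν))

theorem ren_mul {π : RPair A} {μ ν : Equiv.Perm A} (h : ν ∈ renamings π) (h' : μ ∈ renamings π) :
    ν * μ ∈ renamings π :=
  Relation.ReflTransGen.trans (show RStar π _ from h') (star_rename μ (show RStar π _ from h))

theorem ren_one (π : RPair A) : 1 ∈ renamings π := Relation.ReflTransGen.refl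

theorem ren_pow {π : RPair A} {ν : Equiv.Perm A} (h : ν ∈ renamings π) (k : ℕ) :
    ν ^ k ∈ renamings π := by
  induction k with
  | zero => exact ren_one π
  | succ k ih => rw [pow_succ]; exact ren_mul ih h

def renG (π : RPair A) : Subgroup (Equiv.Perm A) where
  carrier := renamings π
  mul_mem' := ren_mul
  one_mem' := ren_one π
  inv_mem' := by
    intro ν h
    have hk := ren_pow h (orderOf ν - 1)
    have : ν ^ (orderOf ν - 1) = ν⁻¹ := by
      rw [eq_inv_iff_mul_eq_one, ← pow_succ, Nat.sub_add_cancel (orderOf_pos ν), pow_orderOf_eq_one]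
    rwa [← this]

theorem ren_of_lists {π π' : RPair A} (h : RStar π π') (ν : Equiv.Perm A)
    (h0 : toL (π' false) = (toL (π false)).map ν.symm)
    (h1 : toL (π' true) = (toL (π true)).map ν.symm) : ν ∈ renG π := by
  have : pairRename π ν = π' := by
    funext ε
    apply toL_inj
    cases ε
    · rw [h0]; exact toL_rename _ _
    · rw [h1]; exact toL_rename _ _
  show RStar π (pairRename π ν)
  rw [this]; exact h

theorem map_fix (f : A → A) (P : List A) (h : ∀ x ∈ P, f x = x) : P.map f = P := by
  conv_rhs => rw [← List.map_id P]
  exact List.map_congr_left h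

theorem split_list (l : List A) (m : ℕ) (N : ℕ) (hl : l.length = N) (hm : m + 4 ≤ N) (a b c z : A)
    (ha : l[0]? = some a) (hb : l[m+1]? = some b) (hc : l[m+2]? = some c)
    (hz : l[N-1]? = some z) :
    ∃ P Q, l = a :: P ++ b :: c :: Q ++ [z] := by
  refine ⟨(l.drop 1).take m, (l.drop (m+3)).take (N - m - 4), ?_⟩
  subst hl
  apply List.ext_getElem?
  intro i
  grind

theorem alt_le [DecidableEq A] (H : Subgroup (Equiv.Perm A)) (a z : A) (haz : a ≠ z)
    (h : ∀ x, x ≠ a → x ≠ z → swap a x * swap a z ∈ H) : alternatingGroup A ≤ H := by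
  have h1 : ∀ x, x ≠ a → swap a x * swap a z ∈ H := by
    intro x hx
    by_cases hz : x = z
    · subst hz; rw [swap_mul_self]; exact H.one_mem
    · exact h x hx hz
  have h2 : ∀ x y, x ≠ y → swap x y * swap a z ∈ H := by
    intro x y hxy
    by_cases hx : x = a
    · subst hx; exact h1 y hxy.symm
    by_cases hy : y = a
    · subst hy; rw [swap_comm]; exact h1 x hx
    have e : swap x y = swap a x * swap a y * swap a x := by
      rw [swap_comm a y, swap_mul_swap_mul_swap hy hxy.symm]
    have := H.mul_mem (H.mul_mem (h1 x hx) (H.inv_mem (h1 y hy))) (h1 x hx)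
    rw [e]
    convert this using 1
    simp [mul_assoc]
  have key : ∀ σ : Equiv.Perm A, (Equiv.Perm.sign σ = 1 → σ ∈ H) ∧
      (Equiv.Perm.sign σ = -1 → σ * swap a z ∈ H) := by
    intro σ
    induction σ using Equiv.Perm.swap_induction_on' with
    | one => exact ⟨fun _ => H.one_mem, fun h => by simp at h⟩
    | mul_swap f x y hxy ih =>
      rw [Equiv.Perm.sign_mul, Equiv.Perm.sign_swap hxy]
      constructor
      · intro hs
        have hs' : Equiv.Perm.sign f = -1 := by
          rcases Int.units_eq_one_or (Equiv.Perm.sign f) with h | h <;> simp_all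
        have := H.mul_mem (ih.2 hs') (H.inv_mem (h2 x y hxy))
        simpa [mul_assoc] using this
      · intro hs
        have hs' : Equiv.Perm.sign f = 1 := by
          rcases Int.units_eq_one_or (Equiv.Perm.sign f) with h | h <;> simp_all
        rw [mul_assoc]
        exact H.mul_mem (ih.1 hs') (h2 x y hxy)
  intro σ hσ
  exact (key σ).1 (Equiv.Perm.mem_alternatingGroup.1 hσ)

theorem nd_facts (a b c z : A) (P Q : List A) (h : (a :: P ++ b :: c :: Q ++ [z]).Nodup) :
    (a ≠ b ∧ a ≠ c ∧ a ≠ z ∧ b ≠ c ∧ b ≠ z ∧ c ≠ z) ∧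
    (∀ u ∈ P, u ≠ a ∧ u ≠ b ∧ u ≠ c ∧ u ≠ z) ∧ (∀ u ∈ Q, u ≠ a ∧ u ≠ b ∧ u ≠ c ∧ u ≠ z) := by
  simp only [List.cons_append, List.append_assoc, List.nodup_cons, List.nodup_append,
    List.mem_append, List.mem_cons, List.not_mem_nil, not_or] at h
  refine ⟨?_, ?_, ?_⟩
  · grind
  · intro u hu
    grind
  · intro u hu
    grind

theorem both_mem [DecidableEq A] (π : RPair A) (a b c z : A) (P Q P' Q' : List A)
    (h0 : toL (π false) = a :: P ++ b :: c :: Q ++ [z])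
    (h1 : toL (π true) = z :: P' ++ c :: b :: Q' ++ [a]) :
    swap a b * swap a z ∈ renG π ∧ swap a c * swap a z ∈ renG π := by
  have nd0 := toL_nodup (π false)
  have nd1 := toL_nodup (π true)
  rw [h0] at nd0
  rw [h1] at nd1
  obtain ⟨⟨ab, ac, az, bc, bz, cz⟩, hP, hQ⟩ := nd_facts _ _ _ _ _ _ nd0
  obtain ⟨-, hP', hQ'⟩ := nd_facts _ _ _ _ _ _ nd1
  have fx : ∀ w : A, ∀ u, u ≠ a → u ≠ w → u ≠ z → (swap a w * swap a z).symm u = u := by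
    intro w u h1 h2 h3
    rw [Equiv.symm_apply_eq, Equiv.Perm.mul_apply, swap_apply_of_ne_of_ne h1 h3,
      swap_apply_of_ne_of_ne h1 h2]
  have fa : ∀ w : A, (swap a w * swap a z).symm w = z := by
    intro w; rw [Equiv.symm_apply_eq, Equiv.Perm.mul_apply]; simp
  have fz : ∀ w : A, w ≠ z → a ≠ z → (swap a w * swap a z).symm z = a := by
    intro w h h'
    rw [Equiv.symm_apply_eq, Equiv.Perm.mul_apply, swap_apply_left,
      swap_apply_of_ne_of_ne h'.symm h.symm]
  have fw : ∀ w : A, w ≠ a → w ≠ z → (swap a w * swap a z).symm a = w := by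
    intro w h h'
    rw [Equiv.symm_apply_eq, Equiv.Perm.mul_apply, swap_apply_of_ne_of_ne h h', swap_apply_right]
  constructor
  · obtain ⟨π', s, e0, e1⟩ := path_b π a b c z P Q P' Q' h0 h1
    refine ren_of_lists s _ ?_ ?_
    · rw [e0, h0]
      simp only [List.map_append, List.map_cons, List.map_nil]
      rw [fw b ab.symm bz, fa, fz b bz az, fx b c ac.symm bc.symm cz,
        map_fix _ P (fun u hu => fx b u (hP u hu).1 (hP u hu).2.1 (hP u hu).2.2.2),
        map_fix _ Q (fun u hu => fx b u (hQ u hu).1 (hQ u hu).2.1 (hQ u hu).2.2.2)]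
    · rw [e1, h1]
      simp only [List.map_append, List.map_cons, List.map_nil]
      rw [fw b ab.symm bz, fa, fz b bz az, fx b c ac.symm bc.symm cz,
        map_fix _ P' (fun u hu => fx b u (hP' u hu).2.2.2 (hP' u hu).2.2.1 (hP' u hu).1),
        map_fix _ Q' (fun u hu => fx b u (hQ' u hu).2.2.2 (hQ' u hu).2.2.1 (hQ' u hu).1)]
  · obtain ⟨π', s, e0, e1⟩ := path_c π a b c z P Q P' Q' h0 h1
    refine ren_of_lists s _ ?_ ?_
    · rw [e0, h0]
      simp only [List.map_append, List.map_cons, List.map_nil]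
      rw [fw c ac.symm cz, fa, fz c cz az, fx c b ab.symm bc bz,
        map_fix _ P (fun u hu => fx c u (hP u hu).1 (hP u hu).2.2.1 (hP u hu).2.2.2),
        map_fix _ Q (fun u hu => fx c u (hQ u hu).1 (hQ u hu).2.2.1 (hQ u hu).2.2.2)]
    · rw [e1, h1]
      simp only [List.map_append, List.map_cons, List.map_nil]
      rw [fw c ac.symm cz, fa, fz c cz az, fx c b ab.symm bc bz,
        map_fix _ P' (fun u hu => fx c u (hP' u hu).2.2.2 (hP' u hu).2.1 (hP' u hu).1),
        map_fix _ Q' (fun u hu => fx c u (hQ' u hu).2.2.2 (hQ' u hu).2.1 (hQ' u hu).1)]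

/-- for `A = {a, b₁,…,b_n, c₁,…,c_n, z}` (2n+2 distinct letters)
with `π₀ : a b₁ c₁ … b_n c_n z` and `π₁ : z c₁ b₁ … c_n b_n a`
(positions written 0-indexed; `b i` denotes `b_{i+1}`),
`π` is irreducible and `Alt(A) ⊆ G(π)`. -/
theorem stmt11 {A : Type*} [Fintype A] [DecidableEq A] [Nonempty A]
    (n : ℕ) (hn : 1 ≤ n) (a z : A) (b c : Fin n → A)
    (hcard : Fintype.card A = 2 * n + 2)
    (π : RPair A)
    (h0a : (π false a : ℕ) = 0)
    (h0b : ∀ i : Fin n, (π false (b i) : ℕ) = 2 * (i : ℕ) + 1)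
    (h0c : ∀ i : Fin n, (π false (c i) : ℕ) = 2 * (i : ℕ) + 2)
    (h0z : (π false z : ℕ) = 2 * n + 1)
    (h1z : (π true z : ℕ) = 0)
    (h1c : ∀ i : Fin n, (π true (c i) : ℕ) = 2 * (i : ℕ) + 1)
    (h1b : ∀ i : Fin n, (π true (b i) : ℕ) = 2 * (i : ℕ) + 2)
    (h1a : (π true a : ℕ) = 2 * n + 1) :
    PairIrreducible π ∧
      (alternatingGroup A : Set (Equiv.Perm A)) ⊆ renamings π := by
  have A0 := toL_get (π false)
  have A1 := toL_get (π true)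
  refine ⟨?_, ?_⟩
  · intro k hk
    have := hk a (by rw [Fin.le_def, h0a]; exact Nat.zero_le _)
    rw [Fin.le_def, h1a] at this
    have := k.isLt
    omega
  have haz : a ≠ z := by
    rintro rfl
    omega
  have main : ∀ i : Fin n, swap a (b i) * swap a z ∈ renG π ∧ swap a (c i) * swap a z ∈ renG π := by
    intro i
    have hi := i.isLt
    obtain ⟨P, Q, e0⟩ := split_list (toL (π false)) (2 * i) (2 * n + 2) (by rw [toL_len, hcard])
      (by omega) a (b i) (c i) z (by rw [← h0a]; exact A0 _) (by rw [← h0b]; exact A0 _)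
      (by rw [← h0c]; exact A0 _)
      (by rw [show 2 * n + 2 - 1 = 2 * n + 1 from rfl, ← h0z]; exact A0 _)
    obtain ⟨P', Q', e1⟩ := split_list (toL (π true)) (2 * i) (2 * n + 2) (by rw [toL_len, hcard])
      (by omega) z (c i) (b i) a (by rw [← h1z]; exact A1 _) (by rw [← h1c]; exact A1 _)
      (by rw [← h1b]; exact A1 _)
      (by rw [show 2 * n + 2 - 1 = 2 * n + 1 from rfl, ← h1a]; exact A1 _)
    exact both_mem π a (b i) (c i) z P Q P' Q' e0 e1
  refine alt_le (renG π) a z haz ?_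
  intro x hxa hxz
  have hx := (π false x).isLt
  have inj : ∀ y, (π false x : ℕ) = π false y → x = y := fun y h =>
    (π false).injective (Fin.ext h)
  have k0 : (π false x : ℕ) ≠ 0 := fun h => hxa (inj a (by omega))
  have k1 : (π false x : ℕ) ≠ 2 * n + 1 := fun h => hxz (inj z (by omega))
  have hlt : ((π false x : ℕ) - 1) / 2 < n := by omega
  rcases Nat.even_or_odd' (π false x : ℕ) with ⟨k, hk | hk⟩
  · have : x = c ⟨k - 1, by omega⟩ := inj _ (by rw [h0c]; simp only; omega)
    rw [this]; exact (main _).2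
  · have : x = b ⟨k, by omega⟩ := inj _ (by rw [h0b, hk])
    rw [this]; exact (main _).1
end

section
/- Let π be a standard irreducible pair on A with a = π₀⁻¹(1), z = π₁⁻¹(1), and suppose there exist s ∈ A and k with 1 < k < N−1 such that π₀(s) = π₁(s) = k+1 and such that the sets B₁ := {b ∈ A : 2 ≤ π₀(b) ≤ k} and {b ∈ A : 2 ≤ π₁(b) ≤ k} coincide (call this set B₁) and the sets B₂ := {b ∈ A : k+2 ≤ π₀(b) ≤ N−1} and {b ∈ A : k+2 ≤ π₁(b) ≤ N−1} coincide (call this set B₂). Let q be the projection of π onto A_q := {a} ∪ B₂ ∪ {z}, and let r be the pair on A_r := {s} ∪ B₁ ∪ {z} defined by r_ε(b) = ρ_ε(τ(b)) where ρ is the projection of π onto {a} ∪ B₁ ∪ {z} and τ : A_r → {a} ∪ B₁ ∪ {z} sends s to a and fixes every element of B₁ ∪ {z}. Then q and r are irreducible, and the subgroup of Sym(A) generated by the identity-extension images of G(q) and G(r) together with all even permutations of A supported on {a, s, z} is contained in G(π). -/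
open Equiv

variable {A : Type*} [Fintype A]

section Aux

/-- list of letters in order of position -/
def lst {X : Type*} [Fintype X] (e : X ≃ Fin (Fintype.card X)) : List X := List.ofFn e.symm

/-- both rows of a pair as lists -/
def LL {X : Type*} [Fintype X] (p : RPair X) : Bool → List X := fun ε => lst (p ε)

/-- multi-step list moves -/
inductive LR {X : Type*} (p p' : Bool → List X) : Prop
  | R (ε : Bool) (t : List X) (c : X) (u v w : List X) (h1 : p ε = t ++ [c])
      (h2 : p (!ε) = u ++ c :: (v ++ w)) (h3 : p' ε = t ++ [c])
      (h4 : p' (!ε) = u ++ c :: (w ++ v)) : LR p p'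
  | L (ε : Bool) (t : List X) (c : X) (u v w : List X) (h1 : p ε = c :: t)
      (h2 : p (!ε) = (v ++ w) ++ c :: u) (h3 : p' ε = c :: t)
      (h4 : p' (!ε) = (w ++ v) ++ c :: u) : LR p p'

theorem LR.symm {X : Type*} {p p' : Bool → List X} (h : LR p p') : LR p' p := by
  cases h with
  | R ε t c u v w h1 h2 h3 h4 => exact .R ε t c u w v h3 h4 h1 h2
  | L ε t c u v w h1 h2 h3 h4 => exact .L ε t c u w v h3 h4 h1 h2

/-- connectivity -/
def Conn {X : Type*} (p p' : Bool → List X) : Prop := Relation.ReflTransGen LR p p'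

theorem Conn.symm {X : Type*} {p p' : Bool → List X} (h : Conn p p') : Conn p' p := by
  unfold Conn at *
  induction h with
  | refl => exact .refl
  | tail _ h2 ih => exact Relation.ReflTransGen.head h2.symm ih

theorem Conn.trans {X : Type*} {p p' p'' : Bool → List X} (h : Conn p p') (h' : Conn p' p'') :
    Conn p p'' := Relation.ReflTransGen.trans h h'

theorem LR.conn {X : Type*} {p p' : Bool → List X} (h : LR p p') : Conn p p' :=
  Relation.ReflTransGen.single h

/-- rigid substitution -/
def Rigid {X Y : Type*} (f : Bool → X → List Y) : Prop :=
  ∀ c, (∃ y, ∀ ε, ∃ α, f ε c = α ++ [y]) ∧ (∃ y, ∀ ε, ∃ α, f ε c = y :: α)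

/-- substitution -/
def Sbst {X Y : Type*} (f : Bool → X → List Y) (p : Bool → List X) : Bool → List Y :=
  fun ε => (p ε).flatMap (f ε)

theorem LR.sub {X Y : Type*} {f : Bool → X → List Y} (hf : Rigid f) {p p' : Bool → List X}
    (h : LR p p') : LR (Sbst f p) (Sbst f p') := by
  cases h with
  | R ε t c u v w h1 h2 h3 h4 =>
    obtain ⟨y, hy⟩ := (hf c).1
    obtain ⟨α, hα⟩ := hy ε
    obtain ⟨β, hβ⟩ := hy (!ε)
    refine .R ε (t.flatMap (f ε) ++ α) y (u.flatMap (f (!ε)) ++ β) (v.flatMap (f (!ε)))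
      (w.flatMap (f (!ε))) ?_ ?_ ?_ ?_ <;> simp [Sbst, h1, h2, h3, h4, hα, hβ]
  | L ε t c u v w h1 h2 h3 h4 =>
    obtain ⟨y, hy⟩ := (hf c).2
    obtain ⟨α, hα⟩ := hy ε
    obtain ⟨β, hβ⟩ := hy (!ε)
    refine .L ε (α ++ t.flatMap (f ε)) y (β ++ u.flatMap (f (!ε))) (v.flatMap (f (!ε)))
      (w.flatMap (f (!ε))) ?_ ?_ ?_ ?_ <;> simp [Sbst, h1, h2, h3, h4, hα, hβ]

theorem Conn.sub {X Y : Type*} {f : Bool → X → List Y} (hf : Rigid f) {p p' : Bool → List X}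
    (h : Conn p p') : Conn (Sbst f p) (Sbst f p') := by
  unfold Conn at *
  induction h with
  | refl => exact .refl
  | tail _ h2 ih => exact ih.tail (h2.sub hf)

theorem mem_lst {X : Type*} [Fintype X] (e : X ≃ Fin (Fintype.card X)) (x : X) : x ∈ lst e := by
  simp only [lst, List.mem_ofFn]
  exact ⟨e x, by simp⟩

theorem nodup_lst {X : Type*} [Fintype X] (e : X ≃ Fin (Fintype.card X)) : (lst e).Nodup :=
  List.nodup_ofFn.2 e.symm.injective

theorem length_lst {X : Type*} [Fintype X] (e : X ≃ Fin (Fintype.card X)) :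
    (lst e).length = Fintype.card X := by simp [lst]

theorem pos_lst {X : Type*} [Fintype X] (e : X ≃ Fin (Fintype.card X)) {u v : List X} {x : X}
    (h : lst e = u ++ x :: v) : (e x : ℕ) = u.length := by
  have h1 : (lst e)[u.length]? = some x := by rw [h]; simp
  unfold lst at h1
  rw [List.getElem?_ofFn] at h1
  split at h1
  · rename_i h2
    have h3 := Option.some.inj h1
    rw [← h3]; simp
  · simp at h1

theorem exists_lst {X : Type*} [Fintype X] (l : List X) (hn : l.Nodup) (hm : ∀ x, x ∈ l) :
    ∃ e : X ≃ Fin (Fintype.card X), lst e = l := by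
  classical
  have hl : l.length = Fintype.card X := by
    rw [← List.toFinset_card_of_nodup hn]
    have : l.toFinset = Finset.univ := by ext; simp [hm]
    rw [this]; rfl
  refine ⟨((finCongr hl.symm).trans (hn.getEquivOfForallMemList l hm)).symm, ?_⟩
  apply List.ext_getElem
  · simp [length_lst, hl]
  · intro i h1 h2
    simp [lst]

theorem lst_inj {X : Type*} [Fintype X] {e e' : X ≃ Fin (Fintype.card X)} (h : lst e = lst e') :
    e = e' := by
  ext x
  obtain ⟨u, v, huv⟩ := List.append_of_mem (mem_lst e x)
  rw [pos_lst e huv, pos_lst e' (h ▸ huv)]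

theorem right_conds {X : Type*} [Fintype X] {e e' : X ≃ Fin (Fintype.card X)} {u v : List X}
    {c z : X} (h : lst e = u ++ c :: (v ++ [z])) (h' : lst e' = u ++ c :: z :: v) :
    (∀ x, e x ≤ e z) ∧ (∀ b, e b ≤ e c → e' b = e b) ∧ ((e' z : ℕ) = (e c : ℕ) + 1) ∧
    (∀ b, ¬ e b ≤ e c → b ≠ z → (e' b : ℕ) = (e b : ℕ) + 1) := by
  have hc := pos_lst e h
  have hc' := pos_lst e' h'
  have hz := pos_lst e (u := u ++ c :: v) (v := []) (x := z) (by simp [h])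
  have hz' := pos_lst e' (u := u ++ [c]) (v := v) (x := z) (by simp [h'])
  have key : ∀ b, b = z ∨ ((e b : ℕ) ≤ u.length ∧ (e' b : ℕ) = e b) ∨
      ((e b : ℕ) > u.length ∧ (e' b : ℕ) = e b + 1) := by
    intro b
    have hb := mem_lst e b
    rw [h] at hb
    simp only [List.mem_append, List.mem_cons, List.not_mem_nil, or_false] at hb
    rcases hb with hb | hb | hb | hb
    · obtain ⟨u1, u2, rfl⟩ := List.append_of_mem hb
      have h1 := pos_lst e (u := u1) (x := b) (by rw [h]; simp; rfl)
      have h2 := pos_lst e' (u := u1) (x := b) (by rw [h']; simp; rfl)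
      right; left; simp; omega
    · subst hb; right; left; omega
    · obtain ⟨u1, u2, rfl⟩ := List.append_of_mem hb
      have h1 := pos_lst e (u := u ++ c :: u1) (x := b) (by rw [h]; simp; rfl)
      have h2 := pos_lst e' (u := u ++ c :: z :: u1) (x := b) (by rw [h']; simp; rfl)
      simp at h1 h2
      right; right; omega
    · exact .inl hb
  have hlen := length_lst e
  rw [h] at hlen
  simp at hlen hz hz'
  refine ⟨fun x => ?_, fun b hb => ?_, by omega, fun b hb hbz => ?_⟩
  · rw [Fin.le_def]; have := (e x).isLt; omega
  · rw [Fin.le_def] at hb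
    rw [Fin.ext_iff]
    rcases key b with h1 | h1 | h1
    · subst h1; omega
    · omega
    · omega
  · rw [Fin.le_def] at hb
    rcases key b with h1 | h1 | h1
    · exact absurd h1 hbz
    · omega
    · omega

theorem left_conds {X : Type*} [Fintype X] {e e' : X ≃ Fin (Fintype.card X)} {u v : List X}
    {c z : X} (h : lst e = z :: (v ++ c :: u)) (h' : lst e' = v ++ z :: c :: u) :
    (∀ x, e z ≤ e x) ∧ (∀ b, e c ≤ e b → e' b = e b) ∧ ((e' z : ℕ) = (e c : ℕ) - 1) ∧
    (∀ b, ¬ e c ≤ e b → b ≠ z → (e' b : ℕ) = (e b : ℕ) - 1) := by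
  have hc := pos_lst e (u := z :: v) (v := u) (x := c) (by simp [h])
  have hc' := pos_lst e' (u := v ++ [z]) (v := u) (x := c) (by simp [h'])
  have hz := pos_lst e (u := []) (x := z) h
  have hz' := pos_lst e' h'
  have key : ∀ b, b = z ∨ ((e b : ℕ) > v.length ∧ (e' b : ℕ) = e b) ∨
      ((e b : ℕ) ≤ v.length ∧ (e' b : ℕ) = e b - 1) := by
    intro b
    have hb := mem_lst e b
    rw [h] at hb
    simp only [List.mem_append, List.mem_cons] at hb
    rcases hb with hb | hb | hb | hb
    · exact .inl hb
    · obtain ⟨u1, u2, rfl⟩ := List.append_of_mem hb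
      have h1 := pos_lst e (u := z :: u1) (x := b) (by rw [h]; simp; rfl)
      have h2 := pos_lst e' (u := u1) (x := b) (by rw [h']; simp; rfl)
      simp at h1 h2
      right; right; simp; omega
    · subst hb; right; left; simp at hc hc'; omega
    · obtain ⟨u1, u2, rfl⟩ := List.append_of_mem hb
      have h1 := pos_lst e (u := z :: v ++ c :: u1) (x := b) (by rw [h]; simp; rfl)
      have h2 := pos_lst e' (u := v ++ z :: c :: u1) (x := b) (by rw [h']; simp; rfl)
      simp at h1 h2
      right; left; omega
  simp at hz hc hc'
  refine ⟨fun x => ?_, fun b hb => ?_, by omega, fun b hb hbz => ?_⟩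
  · rw [Fin.le_def]; rw [hz]; simp
  · rw [Fin.le_def] at hb
    rw [Fin.ext_iff]
    rcases key b with h1 | h1 | h1
    · subst h1; rw [hz] at hb; simp at hb; omega
    · omega
    · omega
  · rw [Fin.le_def] at hb
    rcases key b with h1 | h1 | h1
    · exact absurd h1 hbz
    · omega
    · omega

theorem lst_last {X : Type*} [Fintype X] {e : X ≃ Fin (Fintype.card X)} {c : X}
    (h : ∀ x, e x ≤ e c) : ∃ t, lst e = t ++ [c] := by
  obtain ⟨t, t', ht⟩ := List.append_of_mem (mem_lst e c)
  cases t' with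
  | nil => exact ⟨t, ht⟩
  | cons y t' =>
    have h1 := pos_lst e ht
    have h2 := pos_lst e (u := t ++ [c]) (x := y) (v := t') (by simp [ht])
    have h3 := h y
    rw [Fin.le_def] at h3
    simp at h2; omega

theorem lst_first {X : Type*} [Fintype X] {e : X ≃ Fin (Fintype.card X)} {c : X}
    (h : ∀ x, e c ≤ e x) : ∃ t, lst e = c :: t := by
  obtain ⟨t, t', ht⟩ := List.append_of_mem (mem_lst e c)
  cases t with
  | nil => exact ⟨t', ht⟩
  | cons y t =>
    have h1 := pos_lst e ht
    have h2 := pos_lst e (u := []) (x := y) (by rw [ht]; simp; rfl)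
    have h3 := h y
    rw [Fin.le_def] at h3
    simp at h2 h1; omega

theorem last_max {X : Type*} [Fintype X] {e : X ≃ Fin (Fintype.card X)} {c : X} {t : List X}
    (h : lst e = t ++ [c]) (x : X) : e x ≤ e c := by
  have h1 := pos_lst e h
  have h2 := length_lst e
  rw [h] at h2
  simp at h2
  rw [Fin.le_def]; have := (e x).isLt; omega

theorem first_min {X : Type*} [Fintype X] {e : X ≃ Fin (Fintype.card X)} {c : X} {t : List X}
    (h : lst e = c :: t) (x : X) : e c ≤ e x := by
  have h1 := pos_lst e (u := []) h
  rw [Fin.le_def, h1]; simp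

/-- one-step reachability relation -/
def Mv {X : Type*} [Fintype X] (x y : RPair X) : Prop := RightMove x y ∨ LeftMove x y

theorem exists_perm {X : Type*} [Fintype X] (e : X ≃ Fin (Fintype.card X)) (l : List X)
    (h : List.Perm (lst e) l) : ∃ e' : X ≃ Fin (Fintype.card X), lst e' = l :=
  exists_lst l (h.nodup_iff.1 (nodup_lst e)) fun x => h.mem_iff.1 (mem_lst e x)

theorem lr_of_mv {X : Type*} [Fintype X] {p p' : RPair X} (h : Mv p p') :
    LR (LL p) (LL p') := by
  rcases h with ⟨ε, zc, zo, h1, h2, h3, h4, h5, h6⟩ | ⟨ε, zc, zo, h1, h2, h3, h4, h5, h6⟩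
  · obtain ⟨t, ht⟩ := lst_last h1
    obtain ⟨t2, ht2⟩ := lst_last h2
    have hne : zc ∈ t2 := by
      have hm := mem_lst (p (!ε)) zc
      rw [ht2] at hm
      simp only [List.mem_append, List.mem_singleton] at hm
      rcases hm with hm | hm
      · exact hm
      · subst hm
        have ha := pos_lst _ ht2
        have hb := length_lst (p (!ε))
        rw [ht2] at hb
        have := (p' (!ε) zc).isLt
        simp at hb; omega
    obtain ⟨u, v, rfl⟩ := List.append_of_mem hne
    have ht2' : lst (p (!ε)) = u ++ zc :: (v ++ [zo]) := by simp [ht2]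
    obtain ⟨e', he'⟩ := exists_perm (p (!ε)) (u ++ zc :: zo :: v) (by
      rw [ht2']
      refine List.Perm.append_left _ (List.Perm.cons _ ?_)
      exact List.perm_append_comm)
    obtain ⟨-, g2, g3, g4⟩ := right_conds ht2' he'
    have : p' (!ε) = e' := by
      ext b
      by_cases hb : p (!ε) b ≤ p (!ε) zc
      · rw [h4 b hb, g2 b hb]
      · by_cases hz : b = zo
        · subst hz; omega
        · rw [h6 b hb hz, g4 b hb hz]
    refine .R ε t zc u v [zo] ht ht2' (by simp [LL, h3, ht]) ?_
    simp [LL, this, he']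
  · obtain ⟨t, ht⟩ := lst_first h1
    obtain ⟨t2, ht2⟩ := lst_first h2
    by_cases hzz : zc = zo
    · subst hzz
      refine .L ε t zc t2 [] [] ht ht2 (by simp [LL, h3, ht]) ?_
      have : p' (!ε) = p (!ε) := by
        ext b; rw [h4 b (h2 b)]
      simp [LL, this, ht2]
    have hne : zc ∈ t2 := by
      have hm := mem_lst (p (!ε)) zc
      rw [ht2] at hm
      simp only [List.mem_cons] at hm
      rcases hm with hm | hm
      · exact absurd hm hzz
      · exact hm
    obtain ⟨v, u, rfl⟩ := List.append_of_mem hne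
    obtain ⟨e', he'⟩ := exists_perm (p (!ε)) (v ++ zo :: zc :: u) (by
      rw [ht2]
      exact List.perm_middle.symm)
    obtain ⟨-, g2, g3, g4⟩ := left_conds ht2 he'
    have : p' (!ε) = e' := by
      ext b
      by_cases hb : p (!ε) zc ≤ p (!ε) b
      · rw [h4 b hb, g2 b hb]
      · by_cases hz : b = zo
        · subst hz; omega
        · rw [h6 b hb hz, g4 b hb hz]
    refine .L ε t zc u [zo] v ht (by simp [LL, ht2]) (by simp [LL, h3, ht]) ?_
    simp [LL, this, he']

/-- replace one row -/
def upd {X : Type*} [Fintype X] (p : RPair X) (ε : Bool) (e : X ≃ Fin (Fintype.card X)) :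
    RPair X := fun b => if b = ε then e else p b

theorem multi_right {X : Type*} [Fintype X] (ε : Bool) (t : List X) (c : X) (u w : List X) :
    ∀ (v : List X) (p : RPair X), lst (p ε) = t ++ [c] → lst (p (!ε)) = u ++ c :: (v ++ w) →
    ∃ p', Relation.ReflTransGen Mv p p' ∧ lst (p' ε) = t ++ [c] ∧
      lst (p' (!ε)) = u ++ c :: (w ++ v) := by
  induction w using List.reverseRecOn with
  | nil => intro v p h1 h2; exact ⟨p, .refl, h1, by simpa using h2⟩
  | append_singleton w z ih =>
    intro v p h1 h2
    have h2' : lst (p (!ε)) = u ++ c :: ((v ++ w) ++ [z]) := by simp [h2]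
    obtain ⟨e', he'⟩ := exists_perm (p (!ε)) (u ++ c :: z :: (v ++ w)) (by
      rw [h2']
      refine List.Perm.append_left _ (List.Perm.cons _ ?_)
      exact List.perm_append_comm)
    obtain ⟨g1, g2, g3, g4⟩ := right_conds h2' he'
    have e1 : upd p (!ε) e' ε = p ε := by cases ε <;> simp [upd]
    have e2 : upd p (!ε) e' (!ε) = e' := by simp [upd]
    obtain ⟨p', hp, q1, q2⟩ := ih (z :: v) (upd p (!ε) e') (by rw [e1, h1])
      (by rw [e2, he']; simp)
    refine ⟨p', Relation.ReflTransGen.head (.inl ⟨ε, c, z, last_max h1, g1, e1, ?_⟩) hp, q1,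
      by simp [q2]⟩
    rw [e2]; exact ⟨g2, g3, g4⟩

theorem multi_left {X : Type*} [Fintype X] (ε : Bool) (t : List X) (c : X) (u v : List X) :
    ∀ (w : List X) (p : RPair X), lst (p ε) = c :: t → lst (p (!ε)) = (v ++ w) ++ c :: u →
    ∃ p', Relation.ReflTransGen Mv p p' ∧ lst (p' ε) = c :: t ∧
      lst (p' (!ε)) = (w ++ v) ++ c :: u := by
  induction v with
  | nil => intro w p h1 h2; exact ⟨p, .refl, h1, by simpa using h2⟩
  | cons z v ih =>
    intro w p h1 h2
    have h2' : lst (p (!ε)) = z :: ((v ++ w) ++ c :: u) := by simp [h2]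
    obtain ⟨e', he'⟩ := exists_perm (p (!ε)) ((v ++ w) ++ z :: c :: u) (by
      rw [h2']
      exact List.perm_middle.symm)
    obtain ⟨g1, g2, g3, g4⟩ := left_conds h2' he'
    have e1 : upd p (!ε) e' ε = p ε := by cases ε <;> simp [upd]
    have e2 : upd p (!ε) e' (!ε) = e' := by simp [upd]
    obtain ⟨p', hp, q1, q2⟩ := ih (w ++ [z]) (upd p (!ε) e') (by rw [e1, h1])
      (by rw [e2, he']; simp)
    refine ⟨p', Relation.ReflTransGen.head (.inr ⟨ε, c, z, first_min h1, g1, e1, ?_⟩) hp, q1,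
      by simp [q2]⟩
    rw [e2]; exact ⟨g2, g3, g4⟩

theorem LL_ext {X : Type*} [Fintype X] {p p' : RPair X} (h : LL p = LL p') : p = p' := by
  funext ε
  exact lst_inj (congrFun h ε)

theorem reach_of_lr {X : Type*} [Fintype X] (p : RPair X) (m : Bool → List X)
    (h : LR (LL p) m) : ∃ p', Relation.ReflTransGen Mv p p' ∧ LL p' = m := by
  have aux : ∀ (ε : Bool) (f g : Bool → List X), f ε = g ε → f (!ε) = g (!ε) → f = g := by
    intro ε f g h1 h2; funext b; cases b <;> cases ε <;> simp_all
  cases h with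
  | R ε t c u v w h1 h2 h3 h4 =>
    obtain ⟨p', a1, a2, a3⟩ := multi_right ε t c u w v p h1 h2
    exact ⟨p', a1, aux ε _ _ (by rw [h3]; exact a2) (by rw [h4]; exact a3)⟩
  | L ε t c u v w h1 h2 h3 h4 =>
    obtain ⟨p', a1, a2, a3⟩ := multi_left ε t c u v w p h1 h2
    exact ⟨p', a1, aux ε _ _ (by rw [h3]; exact a2) (by rw [h4]; exact a3)⟩

theorem mem_EClass_iff {X : Type*} [Fintype X] (p p' : RPair X) :
    p' ∈ EClass p ↔ Conn (LL p) (LL p') := by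
  change Relation.ReflTransGen Mv p p' ↔ Relation.ReflTransGen LR (LL p) (LL p')
  constructor
  · intro h
    induction h with
    | refl => exact .refl
    | tail _ h2 ih => exact ih.tail (lr_of_mv h2)
  · intro h
    have : ∀ m, Relation.ReflTransGen LR (LL p) m →
        ∃ p', Relation.ReflTransGen Mv p p' ∧ LL p' = m := by
      intro m h
      induction h with
      | refl => exact ⟨p, .refl, rfl⟩
      | tail _ h2 ih =>
        obtain ⟨p1, r1, rfl⟩ := ih
        obtain ⟨p2, r2, h⟩ := reach_of_lr p1 _ h2
        exact ⟨p2, r1.trans r2, h⟩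
    obtain ⟨p2, r2, h2⟩ := this _ h
    rwa [LL_ext h2] at r2

theorem LL_rename {X : Type*} [Fintype X] (p : RPair X) (ν : Equiv.Perm X) :
    LL (pairRename p ν) = fun ε => (LL p ε).map ν.symm := by
  funext ε
  simp only [LL, lst, pairRename, List.map_ofFn]
  rfl

theorem rigid_map {X Y : Type*} (f : X → Y) : Rigid (fun (_ : Bool) x => [f x]) := by
  intro c; exact ⟨⟨f c, fun _ => ⟨[], rfl⟩⟩, ⟨f c, fun _ => ⟨[], rfl⟩⟩⟩

theorem Conn.map {X Y : Type*} (f : X → Y) {p p' : Bool → List X} (h : Conn p p') :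
    Conn (fun ε => (p ε).map f) (fun ε => (p' ε).map f) := by
  have := h.sub (rigid_map f)
  simp only [List.map_eq_flatMap]
  exact this

theorem renamings_mul {X : Type*} [Fintype X] (p : RPair X) {μ ν : Equiv.Perm X}
    (hμ : μ ∈ renamings p) (hν : ν ∈ renamings p) : μ * ν ∈ renamings p := by
  simp only [renamings, Set.mem_ofPred_eq, mem_EClass_iff, LL_rename] at *
  refine hν.trans ?_
  have := hμ.map ν.symm
  simpa [List.map_map, Equiv.Perm.mul_def, Function.comp_def] using this

theorem renamings_one {X : Type*} [Fintype X] (p : RPair X) : (1 : Equiv.Perm X) ∈ renamings p := by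
  simp only [renamings, Set.mem_ofPred_eq, mem_EClass_iff, LL_rename]
  have : (fun ε => (LL p ε).map (Equiv.symm (1 : Equiv.Perm X))) = LL p := by
    funext ε; simp [Equiv.Perm.one_def]
  rw [this]; exact .refl

theorem renamings_inv {X : Type*} [Fintype X] (p : RPair X) {μ : Equiv.Perm X}
    (hμ : μ ∈ renamings p) : μ⁻¹ ∈ renamings p := by
  simp only [renamings, Set.mem_ofPred_eq, mem_EClass_iff, LL_rename] at *
  have := (hμ.map μ).symm
  have e : Equiv.symm μ⁻¹ = μ := rfl
  rw [e]
  simpa [List.map_map, Function.comp_def] using this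

theorem closure_sub {X : Type*} [Fintype X] (p : RPair X) (S : Set (Equiv.Perm X))
    (h : S ⊆ renamings p) : (Subgroup.closure S : Set (Equiv.Perm X)) ⊆ renamings p := by
  intro x hx
  induction hx using Subgroup.closure_induction with
  | mem x hx => exact h hx
  | one => exact renamings_one p
  | mul x y _ _ h1 h2 => exact renamings_mul p h1 h2
  | inv x _ h1 => exact renamings_inv p h1


/-- letter-to-block substitution -/
def blk {C Y : Type*} [DecidableEq C] (val : C → Y) (P : Bool → List Y) (y : Y) (x : C) :
    Bool → C → List Y := fun ε c => if c = x then val c :: (P ε ++ [y]) else [val c]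

theorem rigid_blk {C Y : Type*} [DecidableEq C] (val : C → Y) (P : Bool → List Y) (y : Y) (x : C) :
    Rigid (blk val P y x) := by
  intro c
  by_cases h : c = x
  · refine ⟨⟨y, fun ε => ⟨val c :: P ε, by simp [blk, h]⟩⟩, ⟨val c, fun ε => ⟨P ε ++ [y], by
      simp [blk, h]⟩⟩⟩
  · exact ⟨⟨val c, fun ε => ⟨[], by simp [blk, h]⟩⟩, ⟨val c, fun ε => ⟨[], by simp [blk, h]⟩⟩⟩

theorem flatMap_blk {C Y : Type*} [DecidableEq C] (val : C → Y) (P : Bool → List Y) (y : Y) (x : C)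
    (ε : Bool) (l : List C) (h : x ∉ l) : l.flatMap (blk val P y x ε) = l.map val := by
  induction l with
  | nil => rfl
  | cons b l ih =>
    simp only [List.mem_cons, not_or] at h
    have : ¬ b = x := fun e => h.1 e.symm
    simp [ih h.2, blk, this]

/-- pair of lists -/
def pr {Y : Type*} (l m : List Y) : Bool → List Y := fun b => if b then m else l

theorem key {C Y : Type*} [DecidableEq C] (val : C → Y) (P : Bool → List Y) (y : Y)
    (T U : List C) (a z : C) (hn : (a :: (T ++ [z])).Nodup) (hp : T.Perm U)
    (m : Bool → List C) (hm0 : m false = a :: (T ++ [z])) (hm1 : m true = z :: (U ++ [a]))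
    (x : C) (hx : x ∈ a :: (T ++ [z])) :
    Conn (Sbst (blk val P y x) m) (Sbst (blk val P y z) m) := by
  by_cases hxz : x = z
  · subst hxz; exact .refl
  have hx1 : x ∈ a :: T := by simp [hxz] at hx ⊢; exact hx
  have hx2 : x ∈ U ++ [a] := by
    simp only [List.mem_cons] at hx1
    rcases hx1 with h | h
    · simp [h]
    · simp [hp.mem_iff.1 h]
  have hn2 : (z :: (U ++ [a])).Nodup := by
    refine (List.Perm.nodup_iff ?_).1 hn
    have h1 : (a :: (T ++ [z])).Perm (a :: (z :: T)) := List.Perm.cons _ (List.perm_append_comm)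
    have h2 : (a :: (z :: T)).Perm (z :: (a :: T)) := List.Perm.swap _ _ _
    have h3 : (z :: (a :: T)).Perm (z :: (a :: U)) := (hp.cons _).cons _
    have h4 : (z :: (a :: U)).Perm (z :: (U ++ [a])) := List.Perm.cons _ (List.perm_append_comm (l₁ := [a]))
    exact h1.trans (h2.trans (h3.trans h4))
  obtain ⟨g, h, hgh⟩ := List.append_of_mem hx1
  obtain ⟨v, w, hvw⟩ := List.append_of_mem hx2
  have e0 : a :: (T ++ [z]) = g ++ x :: (h ++ [z]) := by
    rw [← List.cons_append, hgh]; simp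
  rw [e0] at hn
  rw [hvw] at hn2
  rw [e0] at hm0
  rw [hvw] at hm1
  have n1 : x ∉ g := by simp [List.nodup_append, List.nodup_cons] at hn; grind
  have n2 : x ∉ h := by simp [List.nodup_append, List.nodup_cons] at hn; grind
  have n3 : z ∉ g := by simp [List.nodup_append, List.nodup_cons] at hn; grind
  have n4 : z ∉ h := by simp [List.nodup_append, List.nodup_cons] at hn; grind
  have n5 : x ∉ v := by simp [List.nodup_append, List.nodup_cons] at hn2; grind
  have n6 : x ∉ w := by simp [List.nodup_append, List.nodup_cons] at hn2; grind
  have n7 : z ∉ v := by simp [List.nodup_append, List.nodup_cons] at hn2; grind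
  have n8 : z ∉ w := by simp [List.nodup_append, List.nodup_cons] at hn2; grind
  have hzx : ¬ z = x := fun e => hxz e.symm
  set ρ := pr (g ++ x :: (h ++ [z])) (z :: (w ++ (v ++ [x]))) with hρ
  have c1 : Conn m ρ := LR.conn (.R false (g ++ x :: h) z [] (v ++ [x]) w (by simp [hm0])
    (by simp [hm1]) (by simp [hρ, pr]) (by simp [hρ, pr]))
  have c2 : LR (Sbst (blk val P y x) ρ)
      (pr (g.map val ++ val x :: ((P false ++ [y]) ++ (h.map val ++ [val z])))
        (val z :: (P true ++ [y]) ++ w.map val ++ v.map val ++ [val x])) := by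
    refine .R false (g.map val ++ val x :: ((P false ++ [y]) ++ (h.map val))) (val z) []
      (w.map val ++ v.map val ++ [val x]) (P true ++ [y]) ?_ ?_ ?_ ?_
    · simp [Sbst, hρ, pr, flatMap_blk, n1, n2]; simp [blk, hzx]
    · simp [Sbst, hρ, pr, flatMap_blk, n5, n6]; simp [blk, hzx]
    · simp [pr]
    · simp [pr]
  have c3 : LR (pr (g.map val ++ val x :: ((P false ++ [y]) ++ (h.map val ++ [val z])))
        (val z :: (P true ++ [y]) ++ w.map val ++ v.map val ++ [val x]))
        (Sbst (blk val P y z) ρ) := by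
    refine .R true (val z :: (P true ++ [y]) ++ w.map val ++ v.map val) (val x) (g.map val)
      (P false ++ [y]) (h.map val ++ [val z]) ?_ ?_ ?_ ?_
    · simp [pr]
    · simp [pr]
    · simp [Sbst, hρ, pr, flatMap_blk, n7, n8]; simp [blk, hxz]
    · simp [Sbst, hρ, pr, flatMap_blk, n3, n4]; simp [blk, hxz]
  exact (c1.sub (rigid_blk val P y x)).trans (c2.conn.trans (c3.conn.trans
    (c1.sub (rigid_blk val P y z)).symm))

theorem assemble {C Y : Type*} [Fintype C] [DecidableEq C] [Fintype Y] (val : C → Y)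
    (p : RPair Y) (q : RPair C) (P : Bool → List Y) (y : Y)
    (T U : List C) (a z : C)
    (h0 : lst (q false) = a :: (T ++ [z])) (h1 : lst (q true) = z :: (U ++ [a]))
    (hc : Conn (LL p) (Sbst (blk val P y a) (LL q)))
    (ν : Equiv.Perm C) (μ : Equiv.Perm Y) (hμ : ∀ c, μ (val c) = val (ν c))
    (hP : ∀ ε, ∀ x ∈ P ε, μ x = x) (hy : μ y = y) (hν : ν ∈ renamings q) :
    μ ∈ renamings p := by
  have hμ' : ∀ c, μ.symm (val c) = val (ν.symm c) := by
    intro c; rw [Equiv.symm_apply_eq, hμ]; simp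
  have hP' : ∀ ε, (P ε).map μ.symm = P ε := by
    intro ε
    conv_rhs => rw [← List.map_id (P ε)]
    apply List.map_congr_left
    intro x hx; rw [Equiv.symm_apply_eq]; exact (hP ε x hx).symm
  have hy' : μ.symm y = y := by rw [Equiv.symm_apply_eq, hy]
  have hp : T.Perm U := by
    have hq : (lst (q false)).Perm (lst (q true)) :=
      (List.perm_ext_iff_of_nodup (nodup_lst _) (nodup_lst _)).2 fun x => by simp [mem_lst]
    rw [h0, h1] at hq
    have g1 : (a :: (z :: T)).Perm (a :: (T ++ [z])) := List.Perm.cons _ (List.perm_append_comm (l₁ := [z]))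
    have g2 : (z :: (U ++ [a])).Perm (a :: (z :: U)) := 
      (List.Perm.cons _ (List.perm_append_comm)).trans (List.Perm.swap _ _ _)
    have := g1.trans (hq.trans g2)
    simpa using this
  have hn := nodup_lst (q false)
  rw [h0] at hn
  have K : ∀ x x' : C, Conn (Sbst (blk val P y x) (LL q)) (Sbst (blk val P y x') (LL q)) := by
    intro x x'
    have k1 := key val P y T U a z hn hp (LL q) h0 h1 x (h0 ▸ mem_lst (q false) x)
    have k2 := key val P y T U a z hn hp (LL q) h0 h1 x' (h0 ▸ mem_lst (q false) x')
    exact k1.trans k2.symm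
  simp only [renamings, Set.mem_ofPred_eq, mem_EClass_iff] at hν ⊢
  have s1 := hν.sub (rigid_blk val P y (ν.symm a))
  have s2 := hc.map μ.symm
  have e : (fun ε => (Sbst (blk val P y a) (LL q) ε).map μ.symm) =
      Sbst (blk val P y (ν.symm a)) (LL (pairRename q ν)) := by
    funext ε
    rw [LL_rename]
    simp only [Sbst, List.map_flatMap, List.flatMap_map]
    congr 1
    funext c
    by_cases hca : c = a
    · subst hca; simp [blk, hμ', hP', hy']
    · simp [blk, hca, hμ']
  rw [e] at s2
  rw [LL_rename]
  exact hc.trans ((K _ _).trans (s1.trans s2.symm))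

theorem lst_map_eq {C Y : Type*} [Fintype C] (q : C ≃ Fin (Fintype.card C)) (g : C → Y)
    (f : Y → ℕ) (hmono : ∀ x x', q x < q x' → f (g x) < f (g x')) (l : List Y)
    (hl : l.Pairwise (fun x y => f x < f y)) (hm : ∀ y, y ∈ l ↔ ∃ x, g x = y) :
    (lst q).map g = l := by
  have hs : ((lst q).map g).Pairwise (fun x y => f x < f y) := by
    rw [List.pairwise_map, lst, List.pairwise_ofFn]
    intro i j hij
    apply hmono; simpa using hij
  have nd : ∀ l : List Y, l.Pairwise (fun x y => f x < f y) → l.Nodup := fun l h =>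
    h.imp (fun {x y} h e => by subst e; exact lt_irrefl _ h)
  refine List.Perm.eq_of_pairwise (le := fun x y => f x < f y) ?_ hs hl ?_
  · intro x y _ _ h1 h2; exact absurd h1 (by omega)
  · refine (List.perm_ext_iff_of_nodup (nd _ hs) (nd _ hl)).2 fun y => ?_
    rw [hm]; simp [mem_lst]

theorem lst_sorted {X : Type*} [Fintype X] (e : X ≃ Fin (Fintype.card X)) :
    (lst e).Pairwise (fun x y => (e x : ℕ) < e y) := by
  rw [lst, List.pairwise_ofFn]
  intro i j hij
  simpa using hij

theorem cyc_conn {Y : Type*} (a s z : Y) (P P' Q Q' : List Y) :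
    Conn (pr (a :: (P ++ s :: (Q ++ [z]))) (z :: (P' ++ s :: (Q' ++ [a]))))
      (pr (s :: (P ++ z :: (Q ++ [a]))) (a :: (P' ++ z :: (Q' ++ [s])))) := by
  have h1 : LR (pr (a :: (P ++ s :: (Q ++ [z]))) (z :: (P' ++ s :: (Q' ++ [a]))))
      (pr (a :: (P ++ s :: (Q ++ [z]))) (z :: (Q' ++ a :: (P' ++ [s])))) :=
    .R false (a :: (P ++ s :: Q)) z [] (P' ++ [s]) (Q' ++ [a]) (by simp [pr]) (by simp [pr])
      (by simp [pr]) (by simp [pr])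
  have h2 : LR (pr (a :: (P ++ s :: (Q ++ [z]))) (z :: (Q' ++ a :: (P' ++ [s]))))
      (pr (s :: (Q ++ a :: (P ++ [z]))) (z :: (Q' ++ a :: (P' ++ [s])))) :=
    .L true (Q' ++ a :: (P' ++ [s])) z [] (a :: P) (s :: Q) (by simp [pr]) (by simp [pr])
      (by simp [pr]) (by simp [pr])
  have h3 : LR (pr (s :: (Q ++ a :: (P ++ [z]))) (z :: (Q' ++ a :: (P' ++ [s]))))
      (pr (s :: (Q ++ a :: (P ++ [z]))) (a :: (P' ++ z :: (Q' ++ [s])))) :=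
    .L false (Q ++ a :: (P ++ [z])) s [] (z :: Q') (a :: P') (by simp [pr]) (by simp [pr])
      (by simp [pr]) (by simp [pr])
  have h4 : LR (pr (s :: (Q ++ a :: (P ++ [z]))) (a :: (P' ++ z :: (Q' ++ [s]))))
      (pr (s :: (P ++ z :: (Q ++ [a]))) (a :: (P' ++ z :: (Q' ++ [s])))) :=
    .R true (a :: (P' ++ z :: Q')) s [] (Q ++ [a]) (P ++ [z]) (by simp [pr]) (by simp [pr])
      (by simp [pr]) (by simp [pr])
  exact h1.conn.trans (h2.conn.trans (h3.conn.trans h4.conn))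

theorem alt_three {Y : Type*} [Fintype Y] [DecidableEq Y] {a s z : Y} (h1 : a ≠ s) (h2 : a ≠ z)
    (h3 : s ≠ z) (c : Equiv.Perm Y) (ca : c a = s) (cs : c s = z) (cz : c z = a)
    (cx : ∀ x, x ≠ a → x ≠ s → x ≠ z → c x = x) (hc : c ∈ alternatingGroup Y)
    (σ : Equiv.Perm Y) (hσ : σ ∈ alternatingGroup Y)
    (hx : ∀ x, x ≠ a → x ≠ s → x ≠ z → σ x = x) : σ = 1 ∨ σ = c ∨ σ = c⁻¹ := by
  have base : ∀ τ : Equiv.Perm Y, τ ∈ alternatingGroup Y →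
      (∀ x, x ≠ a → x ≠ s → x ≠ z → τ x = x) → τ a = a → τ = 1 := by
    intro τ hτ hx ha
    have hss : τ s = s ∨ τ s = z := by
      by_contra hcon
      push Not at hcon
      have : τ (τ s) = τ s := hx _ (fun e => h1 (τ.injective (ha.trans e.symm))) hcon.1 hcon.2
      exact hcon.1 (τ.injective this)
    have hzz : τ z = s ∨ τ z = z := by
      by_contra hcon
      push Not at hcon
      have : τ (τ z) = τ z := hx _ (fun e => h2 (τ.injective (ha.trans e.symm))) hcon.1 hcon.2
      exact hcon.2 (τ.injective this)
    rcases hss with hs | hs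
    · have hz : τ z = z := by
        rcases hzz with h | h
        · exact absurd (τ.injective (hs.trans h.symm)) h3
        · exact h
      ext x
      by_cases e1 : x = a
      · subst e1; simpa using ha
      by_cases e2 : x = s
      · subst e2; simpa using hs
      by_cases e3 : x = z
      · subst e3; simpa using hz
      simpa using hx x e1 e2 e3
    · exfalso
      have hz : τ z = s := by
        rcases hzz with h | h
        · exact h
        · exact absurd (τ.injective (hs.trans h.symm)) h3
      have : τ = Equiv.swap s z := by
        ext x
        by_cases e1 : x = a
        · subst e1; rw [ha, Equiv.swap_apply_of_ne_of_ne h1 h2]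
        by_cases e2 : x = s
        · subst e2; rw [hs, Equiv.swap_apply_left]
        by_cases e3 : x = z
        · subst e3; rw [hz, Equiv.swap_apply_right]
        rw [hx x e1 e2 e3, Equiv.swap_apply_of_ne_of_ne e2 e3]
      rw [this, Equiv.Perm.mem_alternatingGroup, Equiv.Perm.sign_swap h3] at hτ
      exact absurd hτ (by decide)
  have cix : ∀ x, x ≠ a → x ≠ s → x ≠ z → c⁻¹ x = x := by
    intro x e1 e2 e3
    rw [Equiv.Perm.inv_eq_iff_eq]; exact (cx x e1 e2 e3).symm
  by_cases ha : σ a = a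
  · exact .inl (base σ hσ hx ha)
  by_cases hb : σ a = s
  · right; left
    have := base (c⁻¹ * σ) (mul_mem (inv_mem hc) hσ) (fun x e1 e2 e3 => by
      rw [Equiv.Perm.mul_apply, hx x e1 e2 e3, cix x e1 e2 e3])
      (by rw [Equiv.Perm.mul_apply, hb, Equiv.Perm.inv_eq_iff_eq, ca])
    exact (inv_mul_eq_one.1 this).symm
  by_cases hd : σ a = z
  · right; right
    have := base (c * σ) (mul_mem hc hσ) (fun x e1 e2 e3 => by
      rw [Equiv.Perm.mul_apply, hx x e1 e2 e3, cx x e1 e2 e3])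
      (by rw [Equiv.Perm.mul_apply, hd, cz])
    exact (inv_eq_of_mul_eq_one_right this).symm
  exfalso
  exact ha (σ.injective (hx _ ha hb hd))

theorem decomp {X : Type*} [Fintype X] (e : X ≃ Fin (Fintype.card X)) (a s z : X) (k : ℕ)
    (hk1 : 1 < k) (hk2 : k < Fintype.card X - 1) (ha : (e a : ℕ) = 0) (hs : (e s : ℕ) = k)
    (hz : (e z : ℕ) = Fintype.card X - 1) :
    ∃ P T, lst e = a :: (P ++ s :: (T ++ [z])) ∧
      (∀ x, x ∈ P ↔ 1 ≤ (e x : ℕ) ∧ (e x : ℕ) ≤ k - 1) ∧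
      (∀ x, x ∈ T ↔ k + 1 ≤ (e x : ℕ) ∧ (e x : ℕ) ≤ Fintype.card X - 2) := by
  obtain ⟨t, ht⟩ := lst_last (e := e) (c := z) (fun x => by
    rw [Fin.le_def]; have := (e x).isLt; omega)
  have hst : s ∈ t := by
    have hm := mem_lst e s
    rw [ht] at hm
    simp only [List.mem_append, List.mem_singleton] at hm
    rcases hm with h | h
    · exact h
    · subst h; omega
  obtain ⟨u, T, rfl⟩ := List.append_of_mem hst
  have hu := pos_lst e (u := u) (x := s) (v := T ++ [z]) (by simp [ht])
  cases u with
  | nil => simp at hu; omega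
  | cons b P =>
    have hb := pos_lst e (u := []) (x := b) (v := P ++ s :: (T ++ [z])) (by simp [ht])
    have hba : b = a := e.injective (Fin.ext (by simp at hb; omega))
    subst hba
    have hl : lst e = b :: (P ++ s :: (T ++ [z])) := by simp [ht]
    have hlen := length_lst e
    rw [hl] at hlen
    simp at hlen hu
    have tri : ∀ x, x = b ∨ (x ∈ P ∧ 1 ≤ (e x : ℕ) ∧ (e x : ℕ) ≤ k - 1) ∨ x = s ∨
        (x ∈ T ∧ k + 1 ≤ (e x : ℕ) ∧ (e x : ℕ) ≤ Fintype.card X - 2) ∨ x = z := by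
      intro x
      have hx := mem_lst e x
      rw [hl] at hx
      simp only [List.mem_append, List.mem_cons, List.not_mem_nil, or_false] at hx
      rcases hx with h | h | h | h | h
      · exact .inl h
      · refine .inr (.inl ⟨h, ?_⟩)
        obtain ⟨p1, p2, rfl⟩ := List.append_of_mem h
        have := pos_lst e (u := b :: p1) (x := x) (by rw [hl]; simp; rfl)
        simp at this hu
        omega
      · exact .inr (.inr (.inl h))
      · refine .inr (.inr (.inr (.inl ⟨h, ?_⟩)))
        obtain ⟨p1, p2, rfl⟩ := List.append_of_mem h
        have := pos_lst e (u := b :: (P ++ s :: p1)) (x := x) (by rw [hl]; simp; rfl)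
        simp at this hu hlen
        omega
      · exact .inr (.inr (.inr (.inr h)))
    have hn := nodup_lst e
    rw [hl] at hn
    simp [List.nodup_append, List.nodup_cons] at hn
    refine ⟨P, T, hl, fun x => ⟨fun h => ?_, fun h => ?_⟩, fun x => ⟨fun h => ?_, fun h => ?_⟩⟩
    · rcases tri x with h1 | h1 | h1 | h1 | h1
      · subst h1; exact absurd h (by grind)
      · exact h1.2
      · subst h1; exact absurd h (by grind)
      · exact absurd h (by grind)
      · subst h1; exact absurd h (by grind)
    · rcases tri x with h1 | h1 | h1 | h1 | h1
      · subst h1; omega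
      · exact h1.1
      · subst h1; omega
      · omega
      · subst h1; omega
    · rcases tri x with h1 | h1 | h1 | h1 | h1
      · subst h1; exact absurd h (by grind)
      · exact absurd h (by grind)
      · subst h1; exact absurd h (by grind)
      · exact h1.2
      · subst h1; exact absurd h (by grind)
    · rcases tri x with h1 | h1 | h1 | h1 | h1
      · subst h1; omega
      · omega
      · subst h1; omega
      · exact h1.1
      · subst h1; omega

theorem irr_of {X : Type*} [Fintype X] (q : RPair X) (a : X) (t t' : List X)
    (h0 : lst (q false) = a :: t) (h1 : lst (q true) = t' ++ [a]) : PairIrreducible q := by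
  intro k hk
  have h := hk a ((first_min h0 _).trans_eq ((q false).apply_symm_apply k))
  have h2 := pos_lst _ h1
  have h3 := length_lst (q true)
  rw [h1] at h3
  simp at h3
  rw [Fin.le_def] at h
  have := k.isLt
  omega

theorem card_mono {X : Type*} [DecidableEq X] (S : Finset X) (f : X → ℕ) (x x' : X)
    (h : (S.filter fun y => f y < f x).card < (S.filter fun y => f y < f x').card) :
    f x < f x' := by
  by_contra hc
  refine absurd h (not_lt.2 (Finset.card_le_card ?_))
  intro y
  simp only [Finset.mem_filter]
  rintro ⟨h1, h2⟩
  exact ⟨h1, by omega⟩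

end Aux

/-- for a standard irreducible pair composed of two blocks `B₁`, `B₂`
separated by a letter `s` (with `a = π₀⁻¹(1)`, `z = π₁⁻¹(1)`), the projections `q`
(onto `{a} ∪ B₂ ∪ {z}`) and `r` (onto `{s} ∪ B₁ ∪ {z}`, via `τ : s ↦ a`) are
irreducible, and the subgroup generated by the identity-extensions of `G(q)` and
`G(r)` together with the even permutations supported on `{a,s,z}` is contained in
`G(π)`.  Positions are 0-indexed: 1-based `2 ≤ π_ε(b) ≤ k` reads `1 ≤ ⬝ ≤ k−1`,
1-based `k+2 ≤ π_ε(b) ≤ N−1` reads `k+1 ≤ ⬝ ≤ N−2`, and the 1-based projection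
count `#{c ∈ A' : π_ε(c) ≤ π_ε(b)}` reads `#{c ∈ A' : π_ε(c) < π_ε(b)}`. -/
theorem stmt13 {A : Type*} [Fintype A] [DecidableEq A] [Nonempty A]
    (π : RPair A) (hπ : PairIrreducible π) (hstd : PairStandard π)
    (a s z : A) (k : ℕ)
    (ha : (π false a : ℕ) = 0) (hz : (π true z : ℕ) = 0)
    (hk1 : 1 < k) (hk2 : k < Fintype.card A - 1)
    (hs0 : (π false s : ℕ) = k) (hs1 : (π true s : ℕ) = k)
    (B1 B2 : Finset A)
    (hB1 : ∀ x : A, x ∈ B1 ↔ 1 ≤ (π false x : ℕ) ∧ (π false x : ℕ) ≤ k - 1)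
    (hB1' : ∀ x : A, x ∈ B1 ↔ 1 ≤ (π true x : ℕ) ∧ (π true x : ℕ) ≤ k - 1)
    (hB2 : ∀ x : A,
      x ∈ B2 ↔ k + 1 ≤ (π false x : ℕ) ∧ (π false x : ℕ) ≤ Fintype.card A - 2)
    (hB2' : ∀ x : A,
      x ∈ B2 ↔ k + 1 ≤ (π true x : ℕ) ∧ (π true x : ℕ) ≤ Fintype.card A - 2)
    (q : RPair ↥(insert a (insert z B2)))
    (hq : ∀ (ε : Bool) (x : ↥(insert a (insert z B2))),
      ((q ε) x : ℕ) = ((insert a (insert z B2)).filter fun y => π ε y < π ε (x : A)).card)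
    (r : RPair ↥(insert s (insert z B1)))
    (hr : ∀ (ε : Bool) (x : ↥(insert s (insert z B1))),
      ((r ε) x : ℕ) =
        ((insert a (insert z B1)).filter
          fun y => π ε y < π ε (if (x : A) = s then a else (x : A))).card) :
    PairIrreducible q ∧ PairIrreducible r ∧
      (Subgroup.closure
          ((fun σ : Equiv.Perm ↥(insert a (insert z B2)) =>
              Equiv.Perm.ofSubtype σ) '' renamings q ∪
           (fun σ : Equiv.Perm ↥(insert s (insert z B1)) =>
              Equiv.Perm.ofSubtype σ) '' renamings r ∪
           {σ : Equiv.Perm A | σ ∈ alternatingGroup A ∧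
              ∀ x : A, x ≠ a → x ≠ s → x ≠ z → σ x = x}) :
        Set (Equiv.Perm A)) ⊆ renamings π := by
  have hzN : (π false z : ℕ) = Fintype.card A - 1 := by
    have h := hstd.1
    have : (π true).symm (posFirst A) = z := by
      rw [Equiv.symm_apply_eq]; exact Fin.ext (by simp [posFirst, hz])
    rw [this] at h; rw [h]; rfl
  have haN : (π true a : ℕ) = Fintype.card A - 1 := by
    have h := hstd.2
    have : (π false).symm (posFirst A) = a := by
      rw [Equiv.symm_apply_eq]; exact Fin.ext (by simp [posFirst, ha])
    rw [this] at h; rw [h]; rfl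
  obtain ⟨P0, T0, hl0, hP0, hT0⟩ := decomp (π false) a s z k hk1 hk2 ha hs0 hzN
  obtain ⟨P1, T1, hl1, hP1, hT1⟩ := decomp (π true) z s a k hk1 hk2 hz hs1 haN
  have mP0 : ∀ x, x ∈ P0 ↔ x ∈ B1 := fun x => (hP0 x).trans (hB1 x).symm
  have mP1 : ∀ x, x ∈ P1 ↔ x ∈ B1 := fun x => (hP1 x).trans (hB1' x).symm
  have mT0 : ∀ x, x ∈ T0 ↔ x ∈ B2 := fun x => (hT0 x).trans (hB2 x).symm
  have mT1 : ∀ x, x ∈ T1 ↔ x ∈ B2 := fun x => (hT1 x).trans (hB2' x).symm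
  have has : a ≠ s := by rintro rfl; omega
  have haz : a ≠ z := by rintro rfl; omega
  have hsz : s ≠ z := by rintro rfl; omega
  have aB1 : a ∉ B1 := by rw [hB1]; omega
  have aB2 : a ∉ B2 := by rw [hB2]; omega
  have sB1 : s ∉ B1 := by rw [hB1]; omega
  have sB2 : s ∉ B2 := by rw [hB2]; omega
  have zB1 : z ∉ B1 := by rw [hB1']; omega
  have zB2 : z ∉ B2 := by rw [hB2']; omega
  have hB12 : ∀ x, x ∈ B1 → x ∉ B2 := by intro x; rw [hB1, hB2]; omega
  have so0 := lst_sorted (π false)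
  have so1 := lst_sorted (π true)
  rw [hl0] at so0
  rw [hl1] at so1
  -- the pair q
  have hq0 : (lst (q false)).map Subtype.val = a :: (T0 ++ [z]) := by
    refine lst_map_eq (q false) Subtype.val (fun x => (π false x : ℕ)) ?_ _
      (so0.sublist ?_) ?_
    · intro x x' h
      rw [Fin.lt_def, hq, hq] at h
      exact card_mono _ (fun x => (π false x : ℕ)) _ _ h
    · refine List.Sublist.cons_cons _ ?_
      exact ((List.Sublist.refl _).cons s).trans (List.sublist_append_right _ _)
    · intro y
      simp [mT0]; tauto
  have hq1 : (lst (q true)).map Subtype.val = z :: (T1 ++ [a]) := by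
    refine lst_map_eq (q true) Subtype.val (fun x => (π true x : ℕ)) ?_ _
      (so1.sublist ?_) ?_
    · intro x x' h
      rw [Fin.lt_def, hq, hq] at h
      exact card_mono _ (fun x => (π true x : ℕ)) _ _ h
    · refine List.Sublist.cons_cons _ ?_
      exact ((List.Sublist.refl _).cons s).trans (List.sublist_append_right _ _)
    · intro y
      simp [mT1]; tauto
  obtain ⟨qa, l1, hqa, e1, hl1'⟩ := List.map_eq_cons_iff.1 hq0
  obtain ⟨T, l2, rfl, hT, hl2'⟩ := List.map_eq_append_iff.1 hl1'
  obtain ⟨qz, rfl, e2⟩ := List.map_eq_singleton_iff.1 hl2'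
  obtain ⟨qz', l1, hqz, e3, hl1'⟩ := List.map_eq_cons_iff.1 hq1
  obtain ⟨U, l2, rfl, hU, hl2'⟩ := List.map_eq_append_iff.1 hl1'
  obtain ⟨qa', rfl, e4⟩ := List.map_eq_singleton_iff.1 hl2'
  obtain rfl : qz' = qz := Subtype.ext (e3.trans e2.symm)
  obtain rfl : qa' = qa := Subtype.ext (e4.trans e1.symm)
  -- the pair r
  have hr0 : (lst (r false)).map
      (fun x : ↥(insert s (insert z B1)) => if (x : A) = s then a else (x : A)) =
      a :: (P0 ++ [z]) := by
    refine lst_map_eq (r false) _ (fun x => (π false x : ℕ)) ?_ _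
      (so0.sublist ?_) ?_
    · intro x x' h
      rw [Fin.lt_def, hr, hr] at h
      exact card_mono _ (fun x => (π false x : ℕ)) _ _ h
    · refine List.Sublist.cons_cons _ ?_
      refine List.Sublist.append_left ?_ _
      exact (List.sublist_append_right _ _).cons s
    · intro y
      simp only [List.mem_cons, List.mem_append, mP0, List.not_mem_nil, or_false]
      constructor
      · rintro (h | h | h)
        · exact ⟨⟨s, by simp⟩, by simp [h]⟩
        · exact ⟨⟨y, by simp [h]⟩, by
            have : y ≠ s := by rintro rfl; exact sB1 h
            simp [this]⟩
        · exact ⟨⟨z, by simp⟩, by simp [hsz.symm, h]⟩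
      · rintro ⟨⟨x, hx⟩, rfl⟩
        simp at hx
        by_cases h : x = s
        · simp [h]
        · simp [h] at hx ⊢; tauto
  have hr1 : (lst (r true)).map
      (fun x : ↥(insert s (insert z B1)) => if (x : A) = s then a else (x : A)) =
      z :: (P1 ++ [a]) := by
    refine lst_map_eq (r true) _ (fun x => (π true x : ℕ)) ?_ _
      (so1.sublist ?_) ?_
    · intro x x' h
      rw [Fin.lt_def, hr, hr] at h
      exact card_mono _ (fun x => (π true x : ℕ)) _ _ h
    · refine List.Sublist.cons_cons _ ?_
      refine List.Sublist.append_left ?_ _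
      exact (List.sublist_append_right _ _).cons s
    · intro y
      simp only [List.mem_cons, List.mem_append, mP1, List.not_mem_nil, or_false]
      constructor
      · rintro (h | h | h)
        · exact ⟨⟨z, by simp⟩, by simp [hsz.symm, h]⟩
        · exact ⟨⟨y, by simp [h]⟩, by
            have : y ≠ s := by rintro rfl; exact sB1 h
            simp [this]⟩
        · exact ⟨⟨s, by simp⟩, by simp [h]⟩
      · rintro ⟨⟨x, hx⟩, rfl⟩
        simp at hx
        by_cases h : x = s
        · simp [h]
        · simp [h] at hx ⊢; tauto
  obtain ⟨rs, l1, hrs, f1, hl1'⟩ := List.map_eq_cons_iff.1 hr0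
  obtain ⟨V, l2, rfl, hV, hl2'⟩ := List.map_eq_append_iff.1 hl1'
  obtain ⟨rz, rfl, f2⟩ := List.map_eq_singleton_iff.1 hl2'
  obtain ⟨rz', l1, hrz, f3, hl1'⟩ := List.map_eq_cons_iff.1 hr1
  obtain ⟨W, l2, rfl, hW, hl2'⟩ := List.map_eq_append_iff.1 hl1'
  obtain ⟨rs', rfl, f4⟩ := List.map_eq_singleton_iff.1 hl2'
  have gs : ∀ x : ↥(insert s (insert z B1)), (if (x : A) = s then a else (x : A)) = a →
      (x : A) = s := by
    intro x hx
    by_contra hc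
    rw [if_neg hc] at hx
    have := x.2
    rw [hx] at this
    simp [has, haz, aB1] at this
  have gz : ∀ (x : ↥(insert s (insert z B1))) (y : A),
      (if (x : A) = s then a else (x : A)) = y → y ≠ a → (x : A) = y := by
    intro x y hx hy
    by_cases hc : (x : A) = s
    · rw [if_pos hc] at hx; exact absurd hx.symm hy
    · rwa [if_neg hc] at hx
  replace f1 := gs _ f1
  replace f4 := gs _ f4
  replace f2 := gz _ _ f2 haz.symm
  replace f3 := gz _ _ f3 haz.symm
  obtain rfl : rz' = rz := Subtype.ext (f3.trans f2.symm)
  obtain rfl : rs' = rs := Subtype.ext (f4.trans f1.symm)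
  have hV' : V.map Subtype.val = P0 := by
    rw [← hV]
    refine List.map_congr_left fun x hx => gz x _ rfl fun h => ?_
    have : a ∈ P0 := by rw [← hV]; exact List.mem_map.2 ⟨x, hx, h⟩
    exact aB1 ((mP0 a).1 this)
  have hW' : W.map Subtype.val = P1 := by
    rw [← hW]
    refine List.map_congr_left fun x hx => gz x _ rfl fun h => ?_
    have : a ∈ P1 := by rw [← hW]; exact List.mem_map.2 ⟨x, hx, h⟩
    exact aB1 ((mP1 a).1 this)
  refine ⟨irr_of q qa' (T ++ [qz']) (qz' :: U) hqa (by simp [hqz]),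
    irr_of r rs' (V ++ [rz']) (rz' :: W) hrs (by simp [hrz]), ?_⟩
  apply closure_sub
  rintro μ ((⟨ν, hν, rfl⟩ | ⟨ν, hν, rfl⟩) | ⟨hμ, hμ'⟩)
  · have hnq0 := nodup_lst (q false)
    have hnq1 := nodup_lst (q true)
    rw [hqa] at hnq0
    rw [hqz] at hnq1
    have n1 : qa' ∉ T := by simp at hnq0; tauto
    have n2 : qa' ∉ U := by simp [List.nodup_append] at hnq1; grind
    have n3 : ¬ qz' = qa' := by rintro rfl; exact haz (e1.symm.trans e2)
    have nm : ∀ x, x ≠ a → x ≠ z → x ∉ B2 → x ∉ insert a (insert z B2) := by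
      intro x h1 h2 h3; simp [h1, h2, h3]
    refine assemble Subtype.val π q (pr P0 P1) s T U qa' qz' hqa hqz ?_ ν _ ?_ ?_ ?_ hν
    · refine LR.conn (.R false (a :: (P0 ++ s :: T0)) z [] (P1 ++ [s]) (T1 ++ [a]) ?_ ?_ ?_ ?_)
      · simp [LL, hl0]
      · simp [LL, hl1]
      · simp [LL, Sbst, hqa, flatMap_blk, n1, hT]; simp [blk, pr, n3, e1, e2]
      · simp [LL, Sbst, hqz, flatMap_blk, n2, hU]; simp [blk, pr, n3, e1, e2]
    · intro c; exact Equiv.Perm.ofSubtype_apply_coe ν c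
    · intro ε x hx
      have hx' : x ∈ B1 := by
        cases ε
        · exact (mP0 x).1 hx
        · exact (mP1 x).1 hx
      refine Equiv.Perm.ofSubtype_apply_of_not_mem ν (nm x ?_ ?_ (hB12 x hx'))
      · rintro rfl; exact aB1 hx'
      · rintro rfl; exact zB1 hx'
    · exact Equiv.Perm.ofSubtype_apply_of_not_mem ν (nm s has.symm hsz sB2)
  · have hnr0 := nodup_lst (r false)
    have hnr1 := nodup_lst (r true)
    rw [hrs] at hnr0
    rw [hrz] at hnr1
    have n1 : rs' ∉ V := by simp at hnr0; tauto
    have n2 : rs' ∉ W := by simp [List.nodup_append] at hnr1; grind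
    have n3 : ¬ rz' = rs' := by rintro rfl; exact hsz (f1.symm.trans f2)
    have nm : ∀ x, x ≠ s → x ≠ z → x ∉ B1 → x ∉ insert s (insert z B1) := by
      intro x h1 h2 h3; simp [h1, h2, h3]
    refine assemble Subtype.val π r (pr T0 T1) a V W rs' rz' hrs hrz ?_ ν _ ?_ ?_ ?_ hν
    · refine LR.conn (.L true (P1 ++ s :: (T1 ++ [a])) z [] (a :: P0) (s :: T0) ?_ ?_ ?_ ?_)
      · simp [LL, hl1]
      · simp [LL, hl0]
      · simp [LL, Sbst, hrz, flatMap_blk, n2, hW']; simp [blk, pr, n3, f1, f2]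
      · simp [LL, Sbst, hrs, flatMap_blk, n1, hV']; simp [blk, pr, n3, f1, f2]
    · intro c; exact Equiv.Perm.ofSubtype_apply_coe ν c
    · intro ε x hx
      have hx' : x ∈ B2 := by
        cases ε
        · exact (mT0 x).1 hx
        · exact (mT1 x).1 hx
      refine Equiv.Perm.ofSubtype_apply_of_not_mem ν (nm x ?_ ?_ (fun h => hB12 x h hx'))
      · rintro rfl; exact sB2 hx'
      · rintro rfl; exact zB2 hx'
    · exact Equiv.Perm.ofSubtype_apply_of_not_mem ν (nm a has haz aB1)
  · set φ : Equiv.Perm A := Equiv.swap a s * Equiv.swap s z with hφ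
    have φa : φ a = s := by
      rw [hφ, Equiv.Perm.mul_apply, Equiv.swap_apply_of_ne_of_ne has haz, Equiv.swap_apply_left]
    have φs : φ s = z := by
      rw [hφ, Equiv.Perm.mul_apply, Equiv.swap_apply_left,
        Equiv.swap_apply_of_ne_of_ne haz.symm hsz.symm]
    have φz : φ z = a := by
      rw [hφ, Equiv.Perm.mul_apply, Equiv.swap_apply_right, Equiv.swap_apply_right]
    have φx : ∀ x, x ≠ a → x ≠ s → x ≠ z → φ x = x := by
      intro x h1 h2 h3
      rw [hφ, Equiv.Perm.mul_apply, Equiv.swap_apply_of_ne_of_ne h2 h3,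
        Equiv.swap_apply_of_ne_of_ne h1 h2]
    have φalt : φ ∈ alternatingGroup A := by
      rw [Equiv.Perm.mem_alternatingGroup, hφ, Equiv.Perm.sign_mul, Equiv.Perm.sign_swap has,
        Equiv.Perm.sign_swap hsz]; rfl
    have φl : ∀ l : List A, (∀ x ∈ l, x ∈ B1 ∨ x ∈ B2) → l.map φ = l := by
      intro l hl
      conv_rhs => rw [← List.map_id l]
      refine List.map_congr_left fun x hx => φx x ?_ ?_ ?_
      · rintro rfl; exact (hl _ hx).elim aB1 aB2
      · rintro rfl; exact (hl _ hx).elim sB1 sB2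
      · rintro rfl; exact (hl _ hx).elim zB1 zB2
    have lP0 := φl P0 fun x hx => .inl ((mP0 x).1 hx)
    have lP1 := φl P1 fun x hx => .inl ((mP1 x).1 hx)
    have lT0 := φl T0 fun x hx => .inr ((mT0 x).1 hx)
    have lT1 := φl T1 fun x hx => .inr ((mT1 x).1 hx)
    have hφi : φ⁻¹ ∈ renamings π := by
      simp only [renamings, Set.mem_ofPred_eq, mem_EClass_iff, LL_rename]
      have e : Equiv.symm φ⁻¹ = φ := rfl
      rw [e]
      have h := cyc_conn a s z P0 P1 T0 T1
      have g1 : LL π = pr (a :: (P0 ++ s :: (T0 ++ [z]))) (z :: (P1 ++ s :: (T1 ++ [a]))) := by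
        funext ε; cases ε
        · simp [LL, pr, hl0]
        · simp [LL, pr, hl1]
      have g2 : (fun ε => (LL π ε).map φ) =
          pr (s :: (P0 ++ z :: (T0 ++ [a]))) (a :: (P1 ++ z :: (T1 ++ [s]))) := by
        funext ε
        rw [g1]
        cases ε
        · simp [pr, φa, φs, φz, lP0, lT0]
        · simp [pr, φa, φs, φz, lP1, lT1]
      rw [g2, g1]
      exact h
    rcases alt_three has haz hsz φ φa φs φz φx φalt μ hμ hμ' with h | h | h
    · rw [h]; exact renamings_one π
    · rw [h, ← inv_inv φ]; exact renamings_inv π hφi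
    · rw [h]; exact hφi
end
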